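/- arXiv:1902.09810 — 7 statements merged into one kernel-verified Lean document; each statement's English description precedes it below -/
import Mathlib

section
/- For every integer k ≥ 2 there exists a constant c = c(k) > 0 with the following property. Let G_< be an ordered graph on n vertices such that every vertex of G_< has degree less than c·n, and such that G_< does not contain the monotone path P_k of length k as an induced ordered subgraph. Then the complement of G_< contains a bi-clique of size at least c·n/log₂ n. -/
/-- A graph `G` contains a bi-clique of size at least `x`: a pair `(A, B)` of disjoint
vertex subsets with `|A| = |B| ≥ x` such that every vertex of `A` is adjacent to every
vertex of `B`. -/
def HasBicliqueGe {V : Type*} (G : SimpleGraph V) (x : ℝ) : Prop :=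
  ∃ A B : Finset V, Disjoint A B ∧ A.card = B.card ∧ x ≤ (A.card : ℝ) ∧
    ∀ a ∈ A, ∀ b ∈ B, G.Adj a b

/-- The ordered graph `H` (on `Fin a` with its natural order) is contained in the ordered
graph `G` (on `Fin b` with its natural order) as an induced ordered subgraph. -/
def ContainsOrdered {a b : ℕ} (H : SimpleGraph (Fin a)) (G : SimpleGraph (Fin b)) : Prop :=
  ∃ φ : Fin a → Fin b, StrictMono φ ∧ ∀ u v : Fin a, H.Adj u v ↔ G.Adj (φ u) (φ v)

/-- The monotone path `P_k` with `k` vertices `v₁ < v₂ < ⋯ < v_k`, where `v_i v_j` is an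
edge iff `|i - j| = 1`. -/
def monotonePath (k : ℕ) : SimpleGraph (Fin k) :=
  SimpleGraph.fromRel (fun i j => (i : ℕ) + 1 = (j : ℕ))

open Classical in
/-- The lowest `j` elements of a finset of a linear order. -/
lemma exists_lowest {V : Type*} [LinearOrder V] (T : Finset V) (j : ℕ) (hj : j ≤ T.card) :
    ∃ L ⊆ T, L.card = j ∧ ∀ a ∈ L, ∀ b ∈ T \ L, a < b := by
  induction j with
  | zero => exact ⟨∅, by simp, by simp, by simp⟩
  | succ j ih =>
    obtain ⟨L, hLT, hc, hL⟩ := ih (by omega)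
    have hne : (T \ L).Nonempty := by
      rw [← Finset.card_pos, Finset.card_sdiff_of_subset hLT]; omega
    have hm := Finset.min'_mem (T \ L) hne
    set x := (T \ L).min' hne with hx
    have hxT := (Finset.mem_sdiff.1 hm).1
    have hxL := (Finset.mem_sdiff.1 hm).2
    refine ⟨insert x L, Finset.insert_subset hxT hLT, by simp [hxL, hc], ?_⟩
    intro a ha b hb
    have hbT := (Finset.mem_sdiff.1 hb).1
    have hbn := (Finset.mem_sdiff.1 hb).2
    simp only [Finset.mem_insert, not_or] at hbn ha
    have hb' : b ∈ T \ L := Finset.mem_sdiff.2 ⟨hbT, hbn.2⟩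
    rcases ha with rfl | ha
    · exact lt_of_le_of_ne (Finset.min'_le _ _ hb') (Ne.symm hbn.1)
    · have hlt := hL a ha b hb'
      exact hlt

/-- Monotone step with endpoint in `W`. -/
def MStep {V : Type*} [LinearOrder V] (G : SimpleGraph V) (W : Finset V) (a b : V) : Prop :=
  a < b ∧ G.Adj a b ∧ b ∈ W

/-- Reachability by monotone paths inside `W`. -/
def MReach {V : Type*} [LinearOrder V] (G : SimpleGraph V) (W : Finset V) (a b : V) : Prop :=
  Relation.ReflTransGen (MStep G W) a b

open Classical in
/-- If `S` is reached and there are no large empty pairs, then most of `L` is reached. -/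
lemma reach_next {V : Type*} [LinearOrder V] (G : SimpleGraph V) (W : Finset V) (m : ℕ)
    (hG : ∀ A B : Finset V, Disjoint A B → m ≤ A.card → m ≤ B.card →
      ∃ a ∈ A, ∃ b ∈ B, G.Adj a b)
    (P : V → Prop) [DecidablePred P] (hP : ∀ a b, P a → MStep G W a b → P b)
    (S L : Finset V) (hS : m ≤ S.card) (hSP : ∀ s ∈ S, P s) (hLW : L ⊆ W)
    (hSL : ∀ s ∈ S, ∀ l ∈ L, s < l) (q : ℕ) (hL : q + m ≤ L.card) :
    q ≤ (L.filter P).card := by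
  by_contra hlt
  have hsum := Finset.card_filter_add_card_filter_not (s := L) P
  obtain ⟨a, ha, b, hb, hab⟩ := hG S (L.filter (fun x => ¬ P x))
    (by
      rw [Finset.disjoint_left]
      intro x hx hx'
      exact lt_irrefl x (hSL x hx x (Finset.mem_filter.1 hx').1)) hS (by omega)
  have hb' := Finset.mem_filter.1 hb
  exact hb'.2 (hP a b (hSP a ha) ⟨hSL a ha b hb'.1, hab, hLW hb'.1⟩)

open Classical in
lemma halving {V : Type*} [LinearOrder V] (G : SimpleGraph V) (W : Finset V) (m : ℕ)
    (hm : 1 ≤ m)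
    (hG : ∀ A B : Finset V, Disjoint A B → m ≤ A.card → m ≤ B.card →
      ∃ a ∈ A, ∃ b ∈ B, G.Adj a b) (t : ℕ) :
    ∀ X S T : Finset V, X.card ≤ 2 ^ t → S ⊆ W → T ⊆ W → 2 * m ≤ S.card →
      (∀ s ∈ S, ∃ x ∈ X, MReach G W x s) → (∀ s ∈ S, ∀ b ∈ T, s < b) → 3 * m * t ≤ T.card →
      ∃ x ∈ X, ∃ S' ⊆ S ∪ T, 2 * m ≤ S'.card ∧ ∀ s ∈ S', MReach G W x s := by
  induction t with
  | zero =>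
    intro X S T hX hSW hTW hS hR hST hT
    obtain ⟨s, hs⟩ : S.Nonempty := by rw [← Finset.card_pos]; omega
    obtain ⟨x, hx, -⟩ := hR s hs
    refine ⟨x, hx, S, Finset.subset_union_left, hS, ?_⟩
    intro s hs
    obtain ⟨y, hy, h⟩ := hR s hs
    have : y = x := Finset.card_le_one.1 (by simpa using hX) y hy x hx
    exact this ▸ h
  | succ t ih =>
    intro X S T hX hSW hTW hS hR hST hT
    have key : ∀ X' ⊆ X, X'.card ≤ 2 ^ t →
        m ≤ (S.filter (fun s => ∃ x ∈ X', MReach G W x s)).card →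
        ∃ x ∈ X, ∃ S' ⊆ S ∪ T, 2 * m ≤ S'.card ∧ ∀ s ∈ S', MReach G W x s := by
      intro X' hX' hc hS'
      obtain ⟨L, hLT, hLc, hL⟩ := exists_lowest T (3 * m) (by nlinarith)
      have h1 := reach_next G W m hG (fun s => ∃ x ∈ X', MReach G W x s)
        (by rintro a b ⟨x, hx, h⟩ hab; exact ⟨x, hx, Relation.ReflTransGen.tail h hab⟩)
        _ L hS' (by intro s hs; exact (Finset.mem_filter.1 hs).2) (hLT.trans hTW)
        (by intro s hs l hl; exact hST s (Finset.mem_filter.1 hs).1 l (hLT hl)) (2 * m)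
        (by omega)
      have hfL := Finset.filter_subset (fun s => ∃ x ∈ X', MReach G W x s) L
      obtain ⟨x, hx, S', hS'sub, hS'c, hS'R⟩ := ih X' _ (T \ L) hc (hfL.trans (hLT.trans hTW))
        (Finset.sdiff_subset.trans hTW) h1
        (by intro s hs; exact (Finset.mem_filter.1 hs).2)
        (by intro s hs b hb; exact hL s (hfL hs) b hb)
        (by rw [Finset.card_sdiff_of_subset hLT, hLc]
            have : 3 * m * (t + 1) = 3 * m * t + 3 * m := by ring
            omega)
      refine ⟨x, hX' hx, S', hS'sub.trans ?_, hS'c, hS'R⟩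
      exact Finset.union_subset ((hfL.trans hLT).trans Finset.subset_union_right)
        (Finset.sdiff_subset.trans Finset.subset_union_right)
    obtain ⟨X1, hX1, hX1c⟩ := Finset.exists_subset_card_eq (s := X) (n := X.card / 2) (by omega)
    have hX2c := Finset.card_sdiff_of_subset hX1
    have hpow : 2 ^ (t + 1) = 2 * 2 ^ t := by ring
    by_cases h : m ≤ (S.filter (fun s => ∃ x ∈ X1, MReach G W x s)).card
    · exact key X1 hX1 (by omega) h
    · refine key (X \ X1) Finset.sdiff_subset (by omega) ?_
      have hsum := Finset.card_filter_add_card_filter_not (s := S)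
        (fun s => ∃ x ∈ X1, MReach G W x s)
      have : (S.filter (fun s => ¬ ∃ x ∈ X1, MReach G W x s)) ⊆
          S.filter (fun s => ∃ x ∈ X \ X1, MReach G W x s) := by
        intro s hs
        rw [Finset.mem_filter] at hs ⊢
        obtain ⟨x, hx, hr⟩ := hR s hs.1
        refine ⟨hs.1, x, Finset.mem_sdiff.2 ⟨hx, fun h1 => hs.2 ⟨x, h1, hr⟩⟩, hr⟩
      have := Finset.card_le_card this
      omega

open Classical in
/-- From a vertex reaching `s`, the last neighbour on the path reaches `s` avoiding `N(v)`. -/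
lemma last_neighbor {V : Type*} [LinearOrder V] [Fintype V] (G : SimpleGraph V) (W : Finset V)
    (v s : V) (h : MReach G W v s) (hne : s ≠ v) :
    ∃ x, v < x ∧ G.Adj v x ∧ x ∈ W ∧ MReach G (W.filter (fun y => ¬ G.Adj v y)) x s := by
  have : v ≤ s ∧ (s = v ∨
      ∃ x, v < x ∧ G.Adj v x ∧ x ∈ W ∧ MReach G (W.filter (fun y => ¬ G.Adj v y)) x s) := by
    clear hne
    induction h with
    | refl => exact ⟨le_rfl, Or.inl rfl⟩
    | @tail b c hb hbc ih =>
      obtain ⟨h1, h2⟩ := ih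
      have hvc : v < c := lt_of_le_of_lt h1 hbc.1
      refine ⟨hvc.le, Or.inr ?_⟩
      by_cases hadj : G.Adj v c
      · exact ⟨c, hvc, hadj, hbc.2.2, Relation.ReflTransGen.refl⟩
      · rcases h2 with rfl | ⟨x, hx1, hx2, hx3, hx4⟩
        · exact absurd hbc.2.1 hadj
        · exact ⟨x, hx1, hx2, hx3, Relation.ReflTransGen.tail hx4
            ⟨hbc.1, hbc.2.1, Finset.mem_filter.2 ⟨hbc.2.2, hadj⟩⟩⟩
  exact this.2.resolve_left hne

open Classical in
/-- Given a reaching set of size `2m` for `X`, find a vertex of `X` reaching a big part of the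
next block. -/
lemma stage {V : Type*} [LinearOrder V] (G : SimpleGraph V) (W : Finset V) (m t q r : ℕ)
    (hm : 1 ≤ m)
    (hG : ∀ A B : Finset V, Disjoint A B → m ≤ A.card → m ≤ B.card →
      ∃ a ∈ A, ∃ b ∈ B, G.Adj a b)
    (X S T : Finset V) (hX : X.card ≤ 2 ^ t) (hSW : S ⊆ W) (hTW : T ⊆ W) (hS : 2 * m ≤ S.card)
    (hR : ∀ s ∈ S, ∃ x ∈ X, MReach G W x s) (hST : ∀ s ∈ S, ∀ b ∈ T, s < b)
    (hT : 3 * m * t + (q + m) + r ≤ T.card) :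
    ∃ x ∈ X, ∃ S' T' : Finset V, S' ⊆ W ∧ T' ⊆ W ∧ q ≤ S'.card ∧
      (∀ s ∈ S', MReach G W x s) ∧ (∀ s ∈ S', ∀ b ∈ T', s < b) ∧ r ≤ T'.card := by
  obtain ⟨L, hLT, hLc, hL⟩ := exists_lowest T (3 * m * t) (by omega)
  obtain ⟨x, hx, S1, hS1, hS1c, hS1R⟩ := halving G W m hm hG t X S L hX hSW (hLT.trans hTW) hS hR
    (fun s hs b hb => hST s hs b (hLT hb)) (by omega)
  have hc1 := Finset.card_sdiff_of_subset hLT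
  obtain ⟨U, hUT, hUc, hU⟩ := exists_lowest (T \ L) (q + m) (by omega)
  have hc2 := Finset.card_sdiff_of_subset hUT
  have h1 := reach_next G W m hG (fun s => MReach G W x s)
    (fun a b h hab => Relation.ReflTransGen.tail h hab) S1 U (by omega) hS1R
    ((hUT.trans Finset.sdiff_subset).trans hTW)
    (by
      intro s hs l hl
      rcases Finset.mem_union.1 (hS1 hs) with h | h
      · exact hST s h l (Finset.sdiff_subset (hUT hl))
      · exact hL s h l (hUT hl)) q (by omega)
  have hf := Finset.filter_subset (fun s => MReach G W x s) U
  exact ⟨x, hx, U.filter (fun s => MReach G W x s), (T \ L) \ U,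
    hf.trans ((hUT.trans Finset.sdiff_subset).trans hTW),
    (Finset.sdiff_subset.trans Finset.sdiff_subset).trans hTW, h1,
    fun s hs => (Finset.mem_filter.1 hs).2, fun s hs b hb => hU s (hf hs) b hb, by omega⟩

open Classical in
lemma build_path {n : ℕ} (G : SimpleGraph (Fin n)) (m t D : ℕ)
    (hm : 1 ≤ m) (hn : n ≤ 2 ^ t)
    (hG : ∀ A B : Finset (Fin n), Disjoint A B → m ≤ A.card → m ≤ B.card →
      ∃ a ∈ A, ∃ b ∈ B, G.Adj a b)
    (hD : ∀ v, (Finset.univ.filter (fun y => G.Adj v y)).card ≤ D) (r : ℕ) :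
    ∀ (v : Fin n) (W S T : Finset (Fin n)), S ⊆ W → T ⊆ W → 2 * m + D + 1 ≤ S.card →
      (∀ s ∈ S, MReach G W v s) → (∀ s ∈ S, ∀ b ∈ T, s < b) →
      r * (3 * m * t + 3 * m + 2 * D + 1) ≤ T.card →
      ∃ φ : Fin (r + 1) → Fin n, φ 0 = v ∧ StrictMono φ ∧
        (∀ i j : Fin (r + 1), (monotonePath (r + 1)).Adj i j ↔ G.Adj (φ i) (φ j)) ∧
        ∀ i : Fin r, φ i.succ ∈ W := by
  induction r with
  | zero =>
    intro v W S T _ _ _ _ _ _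
    refine ⟨fun _ => v, rfl, ?_, ?_, fun i => i.elim0⟩
    · intro i j hij
      exact absurd hij (by omega)
    · intro i j
      have hij : i = j := by omega
      subst hij
      simp
  | succ r ih =>
    intro v W S T hSW hTW hS hR hST hT
    set K := 3 * m * t + 3 * m + 2 * D + 1 with hK
    have hDf : ∀ A : Finset (Fin n), A.card ≤ (A.filter (fun y => ¬ G.Adj v y)).card + D := by
      intro A
      have h1 := Finset.card_filter_add_card_filter_not (s := A) (fun y => G.Adj v y)
      have h2 : (A.filter (fun y => G.Adj v y)).card ≤ D :=
        (Finset.card_le_card (Finset.filter_subset_filter _ (Finset.subset_univ A))).trans (hD v)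
      omega
    have hS1 := hDf (S.erase v)
    have hS2 := Finset.pred_card_le_card_erase (s := S) (a := v)
    have hT1 := hDf T
    have hKr : (r + 1) * K = r * K + K := by ring
    obtain ⟨x, hx, S', T', hS'W, hT'W, hS'c, hS'R, hS'T', hT'c⟩ :=
      stage G (W.filter (fun y => ¬ G.Adj v y)) m t (2 * m + D + 1) (r * K) hm hG
      (Finset.univ.filter (fun y => v < y ∧ G.Adj v y ∧ y ∈ W))
      ((S.erase v).filter (fun y => ¬ G.Adj v y)) (T.filter (fun y => ¬ G.Adj v y))
      ((Finset.card_le_univ _).trans (by simpa using hn))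
      (Finset.filter_subset_filter _ ((Finset.erase_subset _ _).trans hSW))
      (Finset.filter_subset_filter _ hTW)
      (by omega)
      (by
        intro s hs
        have hs1 := Finset.mem_erase.1 (Finset.mem_filter.1 hs).1
        obtain ⟨x, h1, h2, h3, h4⟩ := last_neighbor G W v s (hR s hs1.2) hs1.1
        exact ⟨x, by simp [h1, h2, h3], h4⟩)
      (by
        intro s hs b hb
        exact hST s (Finset.mem_erase.1 (Finset.mem_filter.1 hs).1).2 b (Finset.mem_filter.1 hb).1)
      (by omega)
    obtain ⟨φ, hφ0, hφm, hφa, hφW⟩ := ih x _ S' T' hS'W hT'W hS'c hS'R hS'T' hT'c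
    obtain ⟨-, hvx, hadj, hxW⟩ := Finset.mem_filter.1 hx
    have hcons : ∀ j : Fin (r + 1), (monotonePath (r + 1 + 1)).Adj 0 j.succ ↔ G.Adj v (φ j) := by
      intro j
      refine Fin.cases ?_ (fun j => ?_) j
      · rw [hφ0]
        simp [monotonePath, hadj]
      · have := (Finset.mem_filter.1 (hφW j)).2
        simp [monotonePath, this]
    refine ⟨Fin.cons v φ, rfl, ?_, ?_, ?_⟩
    · intro i j hij
      induction i using Fin.cases with
      | zero =>
        induction j using Fin.cases with
        | zero => exact absurd hij (lt_irrefl _)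
        | succ j =>
          simp only [Fin.cons_zero, Fin.cons_succ]
          exact lt_of_lt_of_le (hφ0 ▸ hvx) (hφm.monotone (Fin.zero_le j))
      | succ i =>
        induction j using Fin.cases with
        | zero => exact absurd hij (by simp)
        | succ j =>
          simp only [Fin.cons_succ]
          exact hφm (by simpa using hij)
    · intro i j
      induction i using Fin.cases with
      | zero =>
        induction j using Fin.cases with
        | zero => simp
        | succ j => simpa using hcons j
      | succ i =>
        induction j using Fin.cases with
        | zero =>
          rw [SimpleGraph.adj_comm, G.adj_comm]
          simpa using hcons i
        | succ j =>
          simp only [Fin.cons_succ]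
          rw [← hφa i j]
          simp [monotonePath]
    · intro i
      simp only [Fin.cons_succ]
      induction i using Fin.cases with
      | zero => rw [hφ0]; exact hxW
      | succ i => exact (Finset.mem_filter.1 (hφW i)).1

open Classical in
lemma contains_of_large {n : ℕ} (G : SimpleGraph (Fin n)) (m t D r : ℕ)
    (hm : 1 ≤ m) (hn : n ≤ 2 ^ t)
    (hG : ∀ A B : Finset (Fin n), Disjoint A B → m ≤ A.card → m ≤ B.card →
      ∃ a ∈ A, ∃ b ∈ B, G.Adj a b)
    (hD : ∀ v, (Finset.univ.filter (fun y => G.Adj v y)).card ≤ D)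
    (hbig : (r + 2) * (3 * m * t + 3 * m + 2 * D + 1) ≤ n) :
    ContainsOrdered (monotonePath (r + 1)) G := by
  set K := 3 * m * t + 3 * m + 2 * D + 1 with hK
  have hKr : (r + 2) * K = r * K + K + K := by ring
  obtain ⟨S, hST, hSc, hS⟩ := exists_lowest (Finset.univ : Finset (Fin n)) (2 * m)
    (by simp; omega)
  have hc := Finset.card_sdiff_of_subset hST
  rw [Finset.card_univ, Fintype.card_fin] at hc
  obtain ⟨x, hx, S', T', hS'W, hT'W, hS'c, hS'R, hS'T', hT'c⟩ :=
    stage G Finset.univ m t (2 * m + D + 1) (r * K) hm hG S S (Finset.univ \ S)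
    ((Finset.card_le_univ _).trans (by simpa using hn)) hST Finset.sdiff_subset (by omega)
    (fun s hs => ⟨s, hs, Relation.ReflTransGen.refl⟩) hS (by omega)
  obtain ⟨φ, -, h1, h2, -⟩ :=
    build_path G m t D hm hn hG hD r x _ S' T' hS'W hT'W hS'c hS'R hS'T' hT'c
  exact ⟨φ, h1, h2⟩

/-- For every `k ≥ 2` there is `c = c(k) > 0` such that every ordered graph on `n`
vertices with all degrees less than `c·n` and no induced ordered `P_k` has a bi-clique
of size at least `c·n / log₂ n` in its complement. -/
theorem monotone_path_free_biclique (k : ℕ) (hk : 2 ≤ k) :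
    ∃ c : ℝ, 0 < c ∧
      ∀ (n : ℕ) (G : SimpleGraph (Fin n)),
        (∀ v : Fin n, ((G.neighborSet v).ncard : ℝ) < c * n) →
        ¬ ContainsOrdered (monotonePath k) G →
        HasBicliqueGe Gᶜ (c * n / Real.logb 2 n) := by
  classical
  obtain ⟨r, rfl⟩ : ∃ r, k = r + 1 := ⟨k - 1, by omega⟩
  refine ⟨1 / (100 * (r + 2)), by positivity, ?_⟩
  intro n G hdeg hfree
  set c : ℝ := 1 / (100 * (r + 2)) with hc
  have hcpos : 0 < c := by positivity
  have hcr : c * (100 * (r + 2)) = 1 := by rw [hc]; field_simp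
  have hr0 : (0 : ℝ) ≤ r := Nat.cast_nonneg r
  have hc2 : c ≤ 1 / 200 := by nlinarith
  have hdeg' : ∀ v, ((Finset.univ.filter (fun y => G.Adj v y)).card : ℝ) < c * n := by
    intro v
    have h := hdeg v
    rw [Set.ncard_eq_toFinset_card'] at h
    convert h using 3
    ext y; simp
  rcases Nat.lt_or_ge n 2 with hn | hn
  · refine ⟨∅, ∅, by simp, rfl, ?_, by simp⟩
    interval_cases n <;> simp
  have hn2 : (2 : ℝ) ≤ n := by exact_mod_cast hn
  set L := Real.logb 2 n with hL
  have hL1 : 1 ≤ L := by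
    rw [hL, Real.le_logb_iff_rpow_le (by norm_num) (by linarith)]
    simpa using hn2
  rcases le_or_gt (c * n / L) 1 with hsmall | hlarge
  · -- a single nonadjacent pair
    let v : Fin n := ⟨0, by omega⟩
    have hex : ∃ w, w ≠ v ∧ ¬ G.Adj v w := by
      by_contra hcon
      push Not at hcon
      have hsub : (Finset.univ.erase v) ⊆ Finset.univ.filter (fun y => G.Adj v y) := by
        intro w hw
        simpa using hcon w (Finset.ne_of_mem_erase hw)
      have h1 := Finset.card_le_card hsub
      rw [Finset.card_erase_of_mem (Finset.mem_univ v), Finset.card_univ, Fintype.card_fin] at h1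
      have h2 : n ≤ (Finset.univ.filter (fun y => G.Adj v y)).card + 1 := by omega
      have h3 : (n : ℝ) ≤ (Finset.univ.filter (fun y => G.Adj v y)).card + 1 := by exact_mod_cast h2
      have h4 := hdeg' v
      nlinarith
    obtain ⟨w, hw, hvw⟩ := hex
    refine ⟨{v}, {w}, by simpa using hw.symm, by simp, by simpa using hsmall, ?_⟩
    intro a ha b hb
    rw [Finset.mem_singleton] at ha hb
    subst ha hb
    rw [SimpleGraph.compl_adj]
    exact ⟨hw.symm, hvw⟩
  by_contra hno
  apply hfree
  set m := ⌈c * n / L⌉₊ with hm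
  have hm1 : 1 ≤ m := Nat.one_le_iff_ne_zero.2 (by
    intro h0; have := Nat.ceil_eq_zero.1 h0; linarith)
  have hmle : (m : ℝ) ≤ 2 * (c * n / L) := by
    have := Nat.ceil_lt_add_one (a := c * n / L) (by linarith)
    linarith
  have hLpos : 0 < L := by linarith
  have hcnL : L < c * n := by rwa [lt_div_iff₀ hLpos, one_mul] at hlarge
  have hmL : (m : ℝ) * L ≤ 2 * (c * n) := by
    calc (m : ℝ) * L ≤ 2 * (c * n / L) * L := by gcongr
      _ = 2 * (c * n) := by field_simp
  set t := ⌈L⌉₊ with ht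
  have htle : (t : ℝ) ≤ 2 * L := by
    have := Nat.ceil_lt_add_one (a := L) (by linarith)
    linarith
  have hnt : n ≤ 2 ^ t := by
    have h1 : L ≤ t := Nat.le_ceil L
    rw [hL, Real.logb_le_iff_le_rpow (by norm_num) (by linarith)] at h1
    rw [Real.rpow_natCast] at h1
    exact_mod_cast h1
  have hcn0 : 0 ≤ c * n := by positivity
  refine contains_of_large G m t ⌊c * n⌋₊ r hm1 hnt ?_ ?_ ?_
  · intro A B hAB hA hB
    by_contra hcon
    push Not at hcon
    obtain ⟨A', hA', hA'c⟩ := Finset.exists_subset_card_eq hA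
    obtain ⟨B', hB', hB'c⟩ := Finset.exists_subset_card_eq hB
    apply hno
    refine ⟨A', B', Finset.disjoint_of_subset_left hA' (Finset.disjoint_of_subset_right hB' hAB),
      by omega, by rw [hA'c]; exact Nat.le_ceil _, ?_⟩
    intro a ha b hb
    rw [SimpleGraph.compl_adj]
    refine ⟨?_, hcon a (hA' ha) b (hB' hb)⟩
    rintro rfl
    exact Finset.disjoint_left.1 hAB (hA' ha) (hB' hb)
  · intro v
    exact Nat.le_floor (hdeg' v).le
  · have hD : ((⌊c * n⌋₊ : ℕ) : ℝ) ≤ c * n := Nat.floor_le hcn0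
    have hm0 : (0 : ℝ) ≤ m := Nat.cast_nonneg m
    have hmt : (m : ℝ) * t ≤ 4 * (c * n) := by nlinarith
    have hm2 : (m : ℝ) ≤ 2 * (c * n) := by nlinarith
    have hK : (3 * m * t + 3 * m + 2 * (⌊c * n⌋₊ : ℕ) + 1 : ℝ) ≤ 100 * (c * n) := by nlinarith
    have : ((r + 2) * (3 * m * t + 3 * m + 2 * (⌊c * n⌋₊ : ℕ) + 1) : ℝ) ≤ n := by
      calc _ ≤ ((r + 2) * (100 * (c * n)) : ℝ) := by gcongr
        _ = (c * (100 * (r + 2))) * n := by ring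
        _ = n := by rw [hcr, one_mul]
    exact_mod_cast this
end

section
/- Let n be a positive integer and let G = G_< be an ordered graph whose vertex set is partitioned as S ∪ T with S < T (every vertex of S precedes every vertex of T), |S| ≥ n/(6·log₂ n), and |T| ≥ n. Then either there exists a vertex v ∈ S such that |P(v,T)| ≥ n/12, or the complement of G contains a bi-clique of size at least n/(12·log₂ n). -/
/-- `w` can be reached from `v` by a monotone `T`-path in the ordered graph `G`:
there is an increasing sequence `v < t₁ < t₂ < ⋯ < t_r = w` with all `tᵢ ∈ T`
and `v t₁, t₁ t₂, …, t_{r−1} t_r` edges of `G`. -/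
def ReachMon {V : Type*} [LinearOrder V] (G : SimpleGraph V) (T : Set V) (v w : V) : Prop :=
  ∃ (r : ℕ) (p : Fin (r + 1) → V), StrictMono p ∧ (∀ i, p i ∈ T) ∧
    v < p 0 ∧ G.Adj v (p 0) ∧
    (∀ i : Fin r, G.Adj (p i.castSucc) (p i.succ)) ∧ p (Fin.last r) = w


lemma reach_single {V : Type*} [LinearOrder V] (G : SimpleGraph V) (T : Set V) (v w : V)
    (hw : w ∈ T) (h : v < w) (ha : G.Adj v w) : ReachMon G T v w :=
  ⟨0, fun _ => w, by intro i j hij; exact absurd hij (by omega), fun _ => hw, h, ha,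
    fun i => i.elim0, rfl⟩

lemma reach_snoc {V : Type*} [LinearOrder V] (G : SimpleGraph V) (T : Set V) (v r w : V)
    (hr : ReachMon G T v r) (hw : w ∈ T) (h : r < w) (ha : G.Adj r w) : ReachMon G T v w := by
  obtain ⟨k, p, hp, hT, h0, h1, h2, h3⟩ := hr
  refine ⟨k + 1, Fin.snoc (α := fun _ => V) p w, ?_, ?_, ?_, ?_, ?_, ?_⟩
  · rw [Fin.strictMono_iff_lt_succ]
    intro i
    induction i using Fin.lastCases with
    | last => 
      rw [Fin.succ_last, Fin.snoc_last, Fin.snoc_castSucc, h3]; exact h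
    | cast i =>
      rw [Fin.snoc_castSucc, Fin.succ_castSucc, Fin.snoc_castSucc]
      exact hp Fin.castSucc_lt_succ
  · intro i
    induction i using Fin.lastCases with
    | last => rw [Fin.snoc_last]; exact hw
    | cast i => rw [Fin.snoc_castSucc]; exact hT i
  · rw [← Fin.castSucc_zero, Fin.snoc_castSucc]; exact h0
  · rw [← Fin.castSucc_zero, Fin.snoc_castSucc]; exact h1
  · intro i
    induction i using Fin.lastCases with
    | last => rw [Fin.succ_last, Fin.snoc_last, Fin.snoc_castSucc, h3]; exact ha
    | cast i =>
      rw [Fin.snoc_castSucc, Fin.succ_castSucc, Fin.snoc_castSucc]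
      exact h2 i
  · rw [Fin.snoc_last]

lemma exists_initial {V : Type*} [LinearOrder V] (L : Finset V) (j : ℕ) (hj : j ≤ L.card) :
    ∃ K ⊆ L, K.card = j ∧ ∀ x ∈ K, ∀ y ∈ L \ K, x < y := by
  induction j with
  | zero => exact ⟨∅, by simp, by simp, by simp⟩
  | succ j ih =>
    obtain ⟨K, hK, hc, hlt⟩ := ih (by omega)
    have hne : (L \ K).Nonempty := by
      rw [← Finset.card_pos, Finset.card_sdiff_of_subset hK]; omega
    have hm := Finset.min'_mem _ hne
    set z := (L \ K).min' hne with hz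
    have hm' := Finset.mem_sdiff.1 hm
    refine ⟨insert z K, ?_, ?_, ?_⟩
    · intro x hx
      rcases Finset.mem_insert.1 hx with rfl | hx
      · exact hm'.1
      · exact hK hx
    · rw [Finset.card_insert_of_notMem hm'.2, hc]
    · intro x hx y hy
      simp only [Finset.mem_sdiff, Finset.mem_insert, not_or] at hy
      have hy' : y ∈ L \ K := Finset.mem_sdiff.2 ⟨hy.1, hy.2.2⟩
      rcases Finset.mem_insert.1 hx with rfl | hx
      · exact lt_of_le_of_ne (Finset.min'_le _ _ hy') (Ne.symm hy.2.1)
      · exact hlt x hx y hy'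

open Classical in
lemma expand {V : Type*} [LinearOrder V] (G : SimpleGraph V) (m : ℕ)
    (hno : ∀ A B : Finset V, A.card = m → B.card = m → (∀ a ∈ A, ∀ b ∈ B, a < b) →
      ∃ a ∈ A, ∃ b ∈ B, G.Adj a b)
    (R L : Finset V) (hR : m ≤ R.card) (hRL : ∀ r ∈ R, ∀ l ∈ L, r < l) :
    L.card < (L.filter (fun l => ∃ r ∈ R, G.Adj r l)).card + m := by
  by_contra hcon
  push Not at hcon
  have h1 := Finset.card_filter_add_card_filter_not (s := L) (fun l => ∃ r ∈ R, G.Adj r l)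
  obtain ⟨A, hA, hAc⟩ := Finset.exists_subset_card_eq hR
  obtain ⟨B, hB, hBc⟩ := Finset.exists_subset_card_eq
    (s := L.filter (fun l => ¬ ∃ r ∈ R, G.Adj r l)) (n := m) (by omega)
  obtain ⟨a, ha, b, hb, hab⟩ := hno A B hAc hBc
    (fun a ha b hb => hRL a (hA ha) b (Finset.mem_filter.1 (hB hb)).1)
  exact (Finset.mem_filter.1 (hB hb)).2 ⟨a, hA ha, hab⟩

open Classical in
lemma core {V : Type*} [LinearOrder V] (G : SimpleGraph V) (T : Finset V) (m : ℕ) (hm : 0 < m)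
    (hno : ∀ A B : Finset V, A.card = m → B.card = m → (∀ a ∈ A, ∀ b ∈ B, a < b) →
      ∃ a ∈ A, ∃ b ∈ B, G.Adj a b) (k : ℕ) :
    ∀ (A R L : Finset V), A.card ≤ 2 ^ k → m ≤ R.card → (∀ r ∈ R, ∀ l ∈ L, r < l) →
      L ⊆ T → (∀ r ∈ R, ∃ a ∈ A, a = r ∨ ReachMon G (↑T) a r) → 3 * m * k ≤ L.card →
      ∃ a ∈ A, L.card < (L.filter (fun l => ReachMon G (↑T) a l)).card + 3 * m * k + m := by
  have step : ∀ a r l, (a = r ∨ ReachMon G (↑T) a r) → l ∈ T → r < l → G.Adj r l →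
      ReachMon G (↑T) a l := by
    intro a r l h hl hrl hadj
    rcases h with rfl | h
    · exact reach_single G _ _ _ hl hrl hadj
    · exact reach_snoc G _ _ r _ h hl hrl hadj
  induction k with
  | zero =>
    intro A R L hA hR hRL hLT hreach _
    have hRne : R.Nonempty := Finset.card_pos.1 (by omega)
    obtain ⟨r0, hr0⟩ := hRne
    obtain ⟨a, ha, -⟩ := hreach r0 hr0
    refine ⟨a, ha, ?_⟩
    have huniq : ∀ b ∈ A, b = a := fun b hb =>
      Finset.card_le_one.1 (by simpa using hA) b hb a ha
    have h1 := expand G m hno R L hR hRL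
    have h2 : (L.filter (fun l => ∃ r ∈ R, G.Adj r l)).card ≤
        (L.filter (fun l => ReachMon G (↑T) a l)).card := by
      apply Finset.card_le_card
      intro l hl
      obtain ⟨hl, r, hr, hadj⟩ := Finset.mem_filter.1 hl
      obtain ⟨b, hb, hbr⟩ := hreach r hr
      rw [huniq b hb] at hbr
      exact Finset.mem_filter.2 ⟨hl, step a r l hbr (hLT hl) (hRL r hr l hl) hadj⟩
    omega
  | succ k ih =>
    intro A R L hA hR hRL hLT hreach hL
    have hexp : 3 * m * (k + 1) = 3 * m * k + 3 * m := by ring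
    obtain ⟨L1, hL1, hc1, hlt1⟩ := exists_initial L (3 * m) (by omega)
    have hc2 : (L \ L1).card = L.card - 3 * m := by
      rw [Finset.card_sdiff_of_subset hL1, hc1]
    have h1 := expand G m hno R L1 hR (fun r hr l hl => hRL r hr l (hL1 hl))
    -- halving
    obtain ⟨A1, hA1, hA1c⟩ := Finset.exists_subset_card_eq (s := A) (n := A.card / 2) (by omega)
    have hA2c : (A \ A1).card = A.card - A.card / 2 := by
      rw [Finset.card_sdiff_of_subset hA1, hA1c]
    have hpow : 2 ^ (k + 1) = 2 * 2 ^ k := by ring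
    have key : ∀ B ⊆ A, B.card ≤ 2 ^ k →
        m ≤ (L1.filter (fun l => ∃ b ∈ B, ReachMon G (↑T) b l)).card →
        ∃ a ∈ A, L.card < (L.filter (fun l => ReachMon G (↑T) a l)).card
          + 3 * m * (k + 1) + m := by
      intro B hB hBc hBr
      obtain ⟨a, ha, h⟩ := ih B _ (L \ L1) hBc hBr
        (fun r hr l hl => hlt1 r (Finset.mem_filter.1 hr).1 l hl)
        (fun x hx => hLT (Finset.mem_sdiff.1 hx).1)
        (fun r hr => by
          obtain ⟨b, hb, hbr⟩ := (Finset.mem_filter.1 hr).2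
          exact ⟨b, hb, Or.inr hbr⟩) (by omega)
      refine ⟨a, hB ha, ?_⟩
      have : ((L \ L1).filter (fun l => ReachMon G (↑T) a l)).card ≤
          (L.filter (fun l => ReachMon G (↑T) a l)).card :=
        Finset.card_le_card (Finset.filter_subset_filter _ Finset.sdiff_subset)
      omega
    have hun : (L1.filter (fun l => ∃ r ∈ R, G.Adj r l)).card ≤
        (L1.filter (fun l => ∃ b ∈ A1, ReachMon G (↑T) b l)).card +
        (L1.filter (fun l => ∃ b ∈ A \ A1, ReachMon G (↑T) b l)).card := by
      refine le_trans (Finset.card_le_card ?_) (Finset.card_union_le _ _)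
      intro l hl
      obtain ⟨hl, r, hr, hadj⟩ := Finset.mem_filter.1 hl
      obtain ⟨b, hb, hbr⟩ := hreach r hr
      have hreach' := step b r l hbr (hLT (hL1 hl)) (hRL r hr l (hL1 hl)) hadj
      by_cases hb1 : b ∈ A1
      · exact Finset.mem_union_left _ (Finset.mem_filter.2 ⟨hl, b, hb1, hreach'⟩)
      · exact Finset.mem_union_right _
          (Finset.mem_filter.2 ⟨hl, b, Finset.mem_sdiff.2 ⟨hb, hb1⟩, hreach'⟩)
    by_cases hc : m ≤ (L1.filter (fun l => ∃ b ∈ A1, ReachMon G (↑T) b l)).card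
    · exact key A1 hA1 (by omega) hc
    · exact key (A \ A1) Finset.sdiff_subset (by omega) (by omega)

lemma numeric (n : ℕ) (hn : 2 ≤ n) :
    (n : ℝ) / 12 + 3 * (⌈(n : ℝ) / (12 * Real.logb 2 n)⌉₊ : ℝ) *
      (Nat.clog 2 ⌈(n : ℝ) / (12 * Real.logb 2 n)⌉₊ : ℝ)
      + (⌈(n : ℝ) / (12 * Real.logb 2 n)⌉₊ : ℝ) ≤ n + 1 := by
  have hn' : (2 : ℝ) ≤ n := by exact_mod_cast hn
  have hlog : 1 ≤ Real.logb 2 n := by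
    rw [Real.le_logb_iff_rpow_le (by norm_num) (by linarith)]; simpa using hn'
  set ℓ := Real.logb 2 n with hℓ
  set x := (n : ℝ) / (12 * ℓ) with hx
  have hx0 : 0 < x := by positivity
  have hxl : x * ℓ = n / 12 := by rw [hx]; field_simp
  have hxle : x ≤ n / 12 := by nlinarith
  set m := ⌈x⌉₊ with hm
  by_cases h1 : x ≤ 1
  · have hm1 : m ≤ 1 := Nat.ceil_le.2 (by simpa using h1)
    have : Nat.clog 2 m = 0 := Nat.clog_of_right_le_one hm1 2
    rw [this]
    have : (m : ℝ) ≤ 1 := by exact_mod_cast hm1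
    push_cast
    linarith
  · push Not at h1
    have hmx : (m : ℝ) < x + 1 := Nat.ceil_lt_add_one hx0.le
    have hm2 : 1 < m := by
      have : (1 : ℝ) < m := lt_of_lt_of_le h1 (Nat.le_ceil x)
      exact_mod_cast this
    have hk : (Nat.clog 2 m : ℝ) ≤ ℓ := by
      have hp := Nat.pow_pred_clog_lt_self (b := 2) (by norm_num) hm2
      have hpos := Nat.clog_pos (b := 2) (by norm_num) hm2
      obtain ⟨k, hk⟩ : ∃ k, Nat.clog 2 m = k + 1 := ⟨Nat.clog 2 m - 1, by omega⟩
      rw [hk] at hp ⊢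
      simp only [Nat.pred_eq_sub_one, Nat.add_sub_cancel] at hp
      have hp' : (2 : ℝ) ^ k < m := by exact_mod_cast hp
      rw [hℓ, Real.le_logb_iff_rpow_le (by norm_num) (by linarith), Real.rpow_natCast, pow_succ]
      linarith
    have hk0 : (0 : ℝ) ≤ (Nat.clog 2 m : ℝ) := Nat.cast_nonneg _
    have : (m : ℝ) * (Nat.clog 2 m : ℝ) ≤ 2 * x * ℓ :=
      mul_le_mul (by linarith) hk hk0 (by linarith)
    nlinarith

/-- Let `G` be an ordered graph on the vertex set `S ∪ T` with `S < T`,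
`|S| ≥ n/(6 log₂ n)` and `|T| ≥ n`. Then either some `v ∈ S` satisfies
`|P(v,T)| ≥ n/12`, or the complement of `G` contains a bi-clique of size
at least `n/(12 log₂ n)`. -/
theorem path_lemma {V : Type*} [Fintype V] [LinearOrder V]
    (G : SimpleGraph V) (S T : Finset V) (n : ℕ) (hn : 0 < n)
    (hunion : S ∪ T = Finset.univ) (hdisj : Disjoint S T)
    (hlt : ∀ s ∈ S, ∀ t ∈ T, s < t)
    (hS : (n : ℝ) / (6 * Real.logb 2 n) ≤ (S.card : ℝ))
    (hT : (n : ℝ) ≤ (T.card : ℝ)) :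
    (∃ v ∈ S, (n : ℝ) / 12 ≤ ({w : V | ReachMon G (↑T) v w}.ncard : ℝ)) ∨
      HasBicliqueGe Gᶜ ((n : ℝ) / (12 * Real.logb 2 n)) := by
  classical
  by_cases hn1 : n = 1
  · right
    subst hn1
    exact ⟨∅, ∅, by simp, rfl, by simp, by simp⟩
  have hn2 : 2 ≤ n := by omega
  have hnum := numeric n hn2
  have hn' : (2 : ℝ) ≤ n := by exact_mod_cast hn2
  have hlog : 1 ≤ Real.logb 2 n := by
    rw [Real.le_logb_iff_rpow_le (by norm_num) (by linarith)]; simpa using hn'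
  have hxS : (n : ℝ) / (12 * Real.logb 2 n) ≤ (S.card : ℝ) := by
    refine le_trans ?_ hS
    gcongr
    norm_num
  have hx0 : 0 < (n : ℝ) / (12 * Real.logb 2 n) := by positivity
  set x := (n : ℝ) / (12 * Real.logb 2 n) with hx
  set m := ⌈x⌉₊ with hm
  have hm0 : 0 < m := Nat.ceil_pos.2 hx0
  by_cases hno : ∀ A B : Finset V, A.card = m → B.card = m → (∀ a ∈ A, ∀ b ∈ B, a < b) →
      ∃ a ∈ A, ∃ b ∈ B, G.Adj a b
  · left
    have hmS : m ≤ S.card := Nat.ceil_le.2 hxS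
    obtain ⟨A, hA, hAc⟩ := Finset.exists_subset_card_eq hmS
    have hsmall : 3 * m * Nat.clog 2 m ≤ T.card := by
      have h1 : (1 : ℝ) ≤ m := by exact_mod_cast hm0
      have : ((3 * m * Nat.clog 2 m : ℕ) : ℝ) ≤ (T.card : ℝ) := by
        push_cast
        linarith
      exact_mod_cast this
    obtain ⟨a, ha, h⟩ := core G T m hm0 hno (Nat.clog 2 m) A A T
      (by rw [hAc]; exact Nat.le_pow_clog (by norm_num) m) hAc.ge
      (fun r hr l hl => hlt r (hA hr) l hl) (Finset.Subset.refl _)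
      (fun r hr => ⟨r, hr, Or.inl rfl⟩) hsmall
    refine ⟨a, hA ha, ?_⟩
    have hsub : (T.filter (fun l => ReachMon G (↑T) a l)).card ≤
        {w : V | ReachMon G (↑T) a w}.ncard := by
      rw [← Set.ncard_coe_finset]
      apply Set.ncard_le_ncard _ (Set.toFinite _)
      intro w hw
      exact (Finset.mem_filter.1 (Finset.mem_coe.1 hw)).2
    have h' : T.card + 1 ≤ {w : V | ReachMon G (↑T) a w}.ncard + 3 * m * Nat.clog 2 m + m := by
      omega
    have h'' : (T.card : ℝ) + 1 ≤ ({w : V | ReachMon G (↑T) a w}.ncard : ℝ)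
        + 3 * m * Nat.clog 2 m + m := by exact_mod_cast h'
    linarith
  · right
    push Not at hno
    obtain ⟨A, B, hA, hB, hAB, h⟩ := hno
    refine ⟨A, B, ?_, by omega, ?_, ?_⟩
    · rw [Finset.disjoint_left]
      intro a ha hb
      exact lt_irrefl _ (hAB a ha a hb)
    · rw [hA]; exact Nat.le_ceil x
    · intro a ha b hb
      rw [SimpleGraph.compl_adj]
      exact ⟨(hAB a ha b hb).ne, h a ha b hb⟩
end

section
/- Let H_< be an ordered graph and let ε > 0. Then there exists a constant c₀ = c₀(H_<, ε) > 0 such that every ordered graph G_< on n vertices that does not contain H_< as an induced ordered subgraph has the following property: there is a subset U of the vertex set of G with |U| ≥ c₀·n such that the induced subgraph G[U] has at most ε·binom(|U|,2) edges, or G[U] has at least (1 − ε)·binom(|U|,2) edges. -/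
/-- The number of edges of the subgraph of `G` induced by `U`. -/
noncomputable def edgeCountIn {V : Type*} (G : SimpleGraph V) (U : Finset V) : ℕ :=
  {e : Sym2 V | e ∈ G.edgeSet ∧ ∀ v ∈ e, v ∈ U}.ncard

open Finset in
open Classical in
/-- number of ordered pairs in `A × B` adjacent in `G` -/
noncomputable def pairCount {V : Type*} (G : SimpleGraph V) (A B : Finset V) : ℝ :=
  ∑ a ∈ A, ∑ b ∈ B, if G.Adj a b then (1 : ℝ) else 0

open Classical in
noncomputable def degTo {V : Type*} (G : SimpleGraph V) (a : V) (B : Finset V) : ℝ :=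
  ∑ b ∈ B, if G.Adj a b then (1 : ℝ) else 0

theorem degTo_eq_card {V : Type*} (G : SimpleGraph V) (a : V) (B : Finset V)
    [DecidablePred (G.Adj a)] : degTo G a B = ((B.filter (fun b => G.Adj a b)).card : ℝ) := by
  classical
  unfold degTo
  rw [Finset.card_filter, Nat.cast_sum]
  apply Finset.sum_congr rfl
  intro b _
  by_cases h : G.Adj a b <;> simp [h]

theorem degTo_nonneg {V : Type*} (G : SimpleGraph V) (a : V) (B : Finset V) :
    0 ≤ degTo G a B := by
  classical
  unfold degTo
  exact Finset.sum_nonneg (fun _ _ => by split_ifs <;> norm_num)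

theorem pairCount_eq {V : Type*} (G : SimpleGraph V) (A B : Finset V) :
    pairCount G A B = ∑ a ∈ A, degTo G a B := rfl

theorem pairCount_nonneg {V : Type*} (G : SimpleGraph V) (A B : Finset V) :
    0 ≤ pairCount G A B := by
  rw [pairCount_eq]
  exact Finset.sum_nonneg (fun _ _ => degTo_nonneg _ _ _)

theorem pairCount_comm {V : Type*} (G : SimpleGraph V) (A B : Finset V) :
    pairCount G A B = pairCount G B A := by
  classical
  unfold pairCount
  rw [Finset.sum_comm]
  simp only [G.adj_comm]

theorem pairCount_union {V : Type*} [DecidableEq V] (G : SimpleGraph V) (A B : Finset V)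
    (h : Disjoint A B) :
    pairCount G (A ∪ B) (A ∪ B) = pairCount G A A + pairCount G B B + 2 * pairCount G A B := by
  classical
  have h2 := pairCount_comm G A B
  unfold pairCount at *
  simp only [Finset.sum_union h, Finset.sum_add_distrib]
  linarith

theorem pairCount_add_compl {V : Type*} (G : SimpleGraph V) (U : Finset V) :
    pairCount G U U + pairCount Gᶜ U U = (U.card : ℝ) ^ 2 - U.card := by
  classical
  have h : ∀ a ∈ U, degTo G a U + degTo Gᶜ a U + 1 = U.card := by
    intro a ha
    have h1 : (1 : ℝ) = ∑ b ∈ U, if a = b then (1 : ℝ) else 0 := by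
      simp [ha]
    have h0 : ∀ x : ℝ, x + 1 = x + ∑ b ∈ U, if a = b then (1 : ℝ) else 0 := fun x => by
      rw [← h1]
    rw [h0]
    unfold degTo
    rw [← Finset.sum_add_distrib, ← Finset.sum_add_distrib]
    rw [Finset.card_eq_sum_ones, Nat.cast_sum]
    apply Finset.sum_congr rfl
    intro b _
    by_cases hab : a = b
    · subst hab; simp
    · by_cases h' : G.Adj a b <;> simp [hab, h', SimpleGraph.compl_adj]
  have h2 := Finset.sum_congr rfl h
  simp only [Finset.sum_add_distrib, Finset.sum_const, nsmul_eq_mul] at h2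
  rw [pairCount_eq, pairCount_eq]
  nlinarith

theorem two_edgeCountIn {n : ℕ} (G : SimpleGraph (Fin n)) (U : Finset (Fin n)) :
    2 * (edgeCountIn G U : ℝ) = pairCount G U U := by
  classical
  let G' : SimpleGraph (Fin n) :=
    { Adj := fun a b => G.Adj a b ∧ a ∈ U ∧ b ∈ U
      symm := ⟨fun a b h => ⟨h.1.symm, h.2.2, h.2.1⟩⟩
      loopless := ⟨fun a h => G.loopless.irrefl a h.1⟩ }
  have h1 : edgeCountIn G U = G'.edgeFinset.card := by
    unfold edgeCountIn
    rw [← Set.ncard_coe_finset]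
    congr 1
    ext e
    induction e using Sym2.ind with
    | _ a b => simp [G']
  rw [h1]
  have h2 := G'.sum_degrees_eq_twice_card_edges
  have h3 : (2 : ℝ) * G'.edgeFinset.card = ∑ v, (G'.degree v : ℝ) := by
    exact_mod_cast h2.symm
  rw [h3, pairCount_eq]
  have h4 : ∀ v, (G'.degree v : ℝ) = if v ∈ U then degTo G v U else 0 := by
    intro v
    rw [← SimpleGraph.card_neighborFinset_eq_degree]
    split_ifs with hv
    · rw [degTo_eq_card]
      congr 2
      ext b
      simp [G', hv, and_comm]
    · have : G'.neighborFinset v = ∅ := by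
        ext b
        simp [G', hv]
      simp [this]
  simp only [h4]
  simp

theorem combine_step {V : Type*} (G : SimpleGraph V) (A B : Finset V) (hAB : Disjoint A B)
    (β' r : ℝ) (hβ' : 0 < β') (hβr : 4 * β' ≤ r) (hr : 0 < r) (s : ℕ) (hs : 0 < s)
    (hdeg : ∀ a ∈ A, degTo G a B ≤ β' * B.card)
    (hA : ∃ A' ⊆ A, A'.card = s ∧ pairCount G A' A' ≤ r * (s : ℝ) ^ 2)
    (hB : ∀ B₀ ⊆ B, (B.card : ℝ) ≤ 2 * B₀.card →
      ∃ B' ⊆ B₀, B'.card = s ∧ pairCount G B' B' ≤ r * (s : ℝ) ^ 2) :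
    ∃ U ⊆ A.disjUnion B hAB, U.card = 2 * s ∧
      pairCount G U U ≤ (3 / 4 * r) * (2 * (s : ℝ)) ^ 2 := by
  classical
  obtain ⟨A', hA'A, hA's, hA'⟩ := hA
  have hs' : (0 : ℝ) < s := by exact_mod_cast hs
  have htot : pairCount G B A' ≤ s * (β' * B.card) := by
    rw [pairCount_comm, pairCount_eq]
    calc _ ≤ ∑ a ∈ A', β' * (B.card : ℝ) := Finset.sum_le_sum (fun a ha => hdeg a (hA'A ha))
      _ = _ := by simp [hA's]
  set B₀ := B.filter (fun b => degTo G b A' ≤ 2 * β' * s) with hB₀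
  set B₁ := B.filter (fun b => ¬ degTo G b A' ≤ 2 * β' * s) with hB₁
  have hcard : B₀.card + B₁.card = B.card := Finset.card_filter_add_card_filter_not _
  have hbad : (B₁.card : ℝ) * (2 * β' * s) ≤ pairCount G B A' := by
    rw [pairCount_eq]
    calc (B₁.card : ℝ) * (2 * β' * s) = ∑ b ∈ B₁, (2 * β' * s) := by simp
      _ ≤ ∑ b ∈ B₁, degTo G b A' := Finset.sum_le_sum (fun b hb => by
          have := (Finset.mem_filter.1 hb).2
          linarith)
      _ ≤ _ := Finset.sum_le_sum_of_subset_of_nonneg (Finset.filter_subset _ _)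
          (fun _ _ _ => degTo_nonneg _ _ _)
  have hb1 : 2 * (B₁.card : ℝ) ≤ B.card := by
    have hp : 0 < β' * s := by positivity
    have : (2 * (B₁.card : ℝ)) * (β' * s) ≤ B.card * (β' * s) := by nlinarith
    exact le_of_mul_le_mul_right this hp
  have hb0 : (B.card : ℝ) ≤ 2 * B₀.card := by
    have : (B₀.card : ℝ) + B₁.card = B.card := by exact_mod_cast hcard
    linarith
  obtain ⟨B', hB'B, hB's, hB'⟩ := hB B₀ (Finset.filter_subset _ _) hb0
  have hB'B2 : B' ⊆ B := hB'B.trans (Finset.filter_subset _ _)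
  have hdis : Disjoint A' B' := Finset.disjoint_of_subset_left hA'A
    (Finset.disjoint_of_subset_right hB'B2 hAB)
  refine ⟨A' ∪ B', ?_, ?_, ?_⟩
  · rw [Finset.disjUnion_eq_union]
    exact Finset.union_subset_union hA'A hB'B2
  · rw [Finset.card_union_of_disjoint hdis]; omega
  · rw [pairCount_union _ _ _ hdis]
    have : pairCount G A' B' ≤ s * (2 * β' * s) := by
      rw [pairCount_comm, pairCount_eq]
      calc _ ≤ ∑ b ∈ B', (2 * β' * (s : ℝ)) :=
            Finset.sum_le_sum (fun b hb => (Finset.mem_filter.1 (hB'B hb)).2)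
        _ = _ := by simp [hB's]
    have h5 : 4 * β' * (s : ℝ) ^ 2 ≤ r * (s : ℝ) ^ 2 := by gcongr
    nlinarith

theorem embed_lemma (β : ℝ) (hβ : 0 < β) (k : ℕ) : ∃ δ : ℝ, 0 < δ ∧ 
    ∀ (H : SimpleGraph (Fin k)) (n : ℕ) (G : SimpleGraph (Fin n)) (W : Fin k → Finset (Fin n))
      (s : ℝ), 0 < s → (∀ i, s ≤ (W i).card) → (∀ i j, i ≠ j → Disjoint (W i) (W j)) →
      (∃ φ : Fin k → Fin n, (∀ i, φ i ∈ W i) ∧ ∀ u v, H.Adj u v ↔ G.Adj (φ u) (φ v)) ∨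
      ∃ i j, ∃ A ⊆ W i, ∃ B ⊆ W j, Disjoint A B ∧ δ * s ≤ A.card ∧ δ * s ≤ B.card ∧
        ((∀ a ∈ A, degTo G a B ≤ β * B.card) ∨ (∀ a ∈ A, degTo Gᶜ a B ≤ β * B.card)) := by
  classical
  induction k with
  | zero =>
    refine ⟨1, one_pos, fun H n G W s hs hW hd => Or.inl ⟨fun i => i.elim0, fun i => i.elim0,
      fun i => i.elim0⟩⟩
  | succ k ih =>
    obtain ⟨δ, hδ, ih⟩ := ih
    refine ⟨min (δ * β) (1 / (k + 1)), by positivity, ?_⟩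
    intro H n G W s hs hW hd
    by_cases hv : ∃ v ∈ W 0, ∀ j : Fin k, β * s ≤
        (((W j.succ).filter (fun w => G.Adj v w ↔ H.Adj 0 j.succ)).card : ℝ)
    · obtain ⟨v, hv0, hv⟩ := hv
      rcases ih (H.comap Fin.succ) n G
        (fun j => (W j.succ).filter (fun w => G.Adj v w ↔ H.Adj 0 j.succ)) (β * s)
        (by positivity) hv (fun i j hij => Finset.disjoint_filter_filter
          (hd _ _ (fun h => hij (Fin.succ_injective _ h)))) with h | h
      · left
        obtain ⟨φ, hφ, hadj⟩ := h
        have hφ1 := fun i => (Finset.mem_filter.1 (hφ i)).1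
        have hφ2 := fun i => (Finset.mem_filter.1 (hφ i)).2
        refine ⟨Fin.cons v φ, ?_, ?_⟩
        · intro i
          refine Fin.cases ?_ ?_ i
          · simpa using hv0
          · intro i; simpa using hφ1 i
        · intro a b
          refine Fin.cases ?_ ?_ a
          · refine Fin.cases ?_ ?_ b
            · simp
            · intro b; simpa using (hφ2 b).symm
          · intro a
            refine Fin.cases ?_ ?_ b
            · rw [H.adj_comm, G.adj_comm]; simpa using (hφ2 a).symm
            · intro b; simpa using hadj a b
      · right
        obtain ⟨i, j, A, hA, B, hB, hAB, hAc, hBc, hh⟩ := h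
        have hle : min (δ * β) (1 / ((k : ℝ) + 1)) * s ≤ δ * (β * s) := by
          rw [← mul_assoc]
          exact mul_le_mul_of_nonneg_right (min_le_left _ _) hs.le
        exact ⟨i.succ, j.succ, A, hA.trans (Finset.filter_subset _ _), B,
          hB.trans (Finset.filter_subset _ _), hAB, hle.trans hAc, hle.trans hBc, hh⟩
    · right
      push Not at hv
      have hpos : (0 : ℝ) < (W 0).card := lt_of_lt_of_le hs (hW 0)
      have hk : 0 < k := by
        obtain ⟨v, hv'⟩ := Finset.card_pos.1 (by exact_mod_cast hpos : 0 < (W 0).card)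
        obtain ⟨j, -⟩ := hv v hv'
        exact j.pos
      have : Nonempty (Fin k) := ⟨⟨0, hk⟩⟩
      choose! f hf using hv
      have hk' : (0 : ℝ) < k := by exact_mod_cast hk
      have hne : (Finset.univ : Finset (Fin k)).Nonempty := ⟨⟨0, hk⟩, Finset.mem_univ _⟩
      obtain ⟨j, -, hj⟩ := Finset.exists_le_card_fiber_of_nsmul_le_card_of_maps_to
        (s := W 0) (t := (Finset.univ : Finset (Fin k))) (f := f) (b := ((W 0).card : ℝ) / k)
        (fun a _ => Finset.mem_univ _) hne (by
          simp only [Finset.card_univ, Fintype.card_fin, nsmul_eq_mul]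
          rw [mul_div_cancel₀ _ hk'.ne'])
      have hk1 : (1 : ℝ) / (k + 1) ≤ 1 / k := one_div_le_one_div_of_le hk' (by linarith)
      have hk2 : (1 : ℝ) / (k + 1) ≤ 1 := by
        rw [div_le_one (by positivity)]; linarith
      refine ⟨0, j.succ, (W 0).filter (fun a => f a = j), Finset.filter_subset _ _, W j.succ,
        subset_rfl, Finset.disjoint_of_subset_left (Finset.filter_subset _ _)
          (hd _ _ (Fin.succ_ne_zero j).symm), ?_, ?_, ?_⟩
      · refine le_trans ?_ hj
        calc _ ≤ (1 / (k : ℝ)) * (W 0).card :=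
              mul_le_mul ((min_le_right _ _).trans hk1) (hW 0) hs.le (by positivity)
          _ = _ := by ring
      · calc _ ≤ 1 * s := mul_le_mul_of_nonneg_right ((min_le_right _ _).trans hk2) hs.le
          _ ≤ _ := by rw [one_mul]; exact hW _
      · have key : ∀ a ∈ (W 0).filter (fun a => f a = j),
            (((W j.succ).filter (fun w => G.Adj a w ↔ H.Adj 0 j.succ)).card : ℝ) ≤
              β * (W j.succ).card := by
          intro a ha
          obtain ⟨ha0, haj⟩ := Finset.mem_filter.1 ha
          have := hf a ha0
          rw [haj] at this
          exact this.le.trans (mul_le_mul_of_nonneg_left (hW _) hβ.le)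
        by_cases hH : H.Adj 0 j.succ
        · left
          intro a ha
          have := key a ha
          simp only [hH, iff_true] at this
          rwa [degTo_eq_card]
        · right
          intro a ha
          have := key a ha
          simp only [hH, iff_false] at this
          rw [degTo_eq_card]
          refine le_trans ?_ this
          exact_mod_cast Finset.card_le_card (fun b hb => by
            simp only [Finset.mem_filter, SimpleGraph.compl_adj] at hb ⊢
            exact ⟨hb.1, hb.2.2⟩)

theorem split_lemma {n : ℕ} (S : Finset (Fin n)) (k m : ℕ) (h : k * m ≤ S.card) :
    ∃ W : Fin k → Finset (Fin n), (∀ i, W i ⊆ S) ∧ (∀ i, (W i).card = m) ∧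
      ∀ i j, i < j → ∀ x ∈ W i, ∀ y ∈ W j, x < y := by
  classical
  have hb : ∀ (i : Fin k) (r : Fin m), i.1 * m + r.1 < S.card := by
    intro i r
    have h1 : (i.1 + 1) * m ≤ k * m := Nat.mul_le_mul_right _ i.2
    have := r.2
    rw [add_mul] at h1
    omega
  refine ⟨fun i => Finset.univ.image
    (fun r : Fin m => S.orderEmbOfFin rfl ⟨i.1 * m + r.1, hb i r⟩), ?_, ?_, ?_⟩
  · intro i x hx
    obtain ⟨r, -, rfl⟩ := Finset.mem_image.1 hx
    exact Finset.orderEmbOfFin_mem _ _ _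
  · intro i
    rw [Finset.card_image_of_injective]
    · simp
    · intro r r' hr
      have := (S.orderEmbOfFin rfl).injective hr
      simp only [Fin.mk.injEq] at this
      ext
      omega
  · intro i j hij x hx y hy
    obtain ⟨r, -, rfl⟩ := Finset.mem_image.1 hx
    obtain ⟨r', -, rfl⟩ := Finset.mem_image.1 hy
    apply (S.orderEmbOfFin rfl).strictMono
    rw [Fin.mk_lt_mk]
    have h1 : (i.1 + 1) * m ≤ j.1 * m := Nat.mul_le_mul_right _ hij
    have := r.2
    rw [add_mul] at h1
    omega

theorem pair_lemma (k : ℕ) (H : SimpleGraph (Fin k)) (β : ℝ) (hβ : 0 < β) :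
    ∃ δ : ℝ, 0 < δ ∧ ∀ (n : ℕ) (G : SimpleGraph (Fin n)), ¬ ContainsOrdered H G →
      ∀ S : Finset (Fin n), k ≤ S.card →
      ∃ A ⊆ S, ∃ B ⊆ S, Disjoint A B ∧ δ * S.card ≤ A.card ∧ δ * S.card ≤ B.card ∧
        ((∀ a ∈ A, degTo G a B ≤ β * B.card) ∨ (∀ a ∈ A, degTo Gᶜ a B ≤ β * B.card)) := by
  obtain ⟨δ, hδ, he⟩ := embed_lemma β hβ k
  rcases Nat.eq_zero_or_pos k with rfl | hk
  · exact ⟨1, one_pos, fun n G hG => absurd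
      ⟨fun i => i.elim0, fun i => i.elim0, fun i => i.elim0⟩ hG⟩
  have hk' : (0 : ℝ) < k := by exact_mod_cast hk
  refine ⟨δ / (2 * k), by positivity, fun n G hG S hS => ?_⟩
  have hm : 0 < S.card / k := Nat.div_pos hS hk
  obtain ⟨W, hWS, hWc, hWlt⟩ := split_lemma S k (S.card / k) (Nat.mul_div_le _ _)
  have hm2 : (S.card : ℝ) ≤ 2 * k * ((S.card / k : ℕ) : ℝ) := by
    have h1 := Nat.lt_mul_div_succ S.card hk
    have h2 : k * 1 ≤ k * (S.card / k) := Nat.mul_le_mul_left _ hm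
    have h3 : S.card ≤ 2 * k * (S.card / k) := by
      rw [Nat.mul_add] at h1
      rw [mul_assoc]
      omega
    exact_mod_cast h3
  rcases he H n G W ((S.card / k : ℕ) : ℝ) (by exact_mod_cast hm)
    (fun i => by rw [hWc]) (by
      intro i j hij
      rw [Finset.disjoint_left]
      intro x hx hx'
      rcases lt_or_gt_of_ne hij with h | h
      · exact lt_irrefl _ (hWlt _ _ h _ hx _ hx')
      · exact lt_irrefl _ (hWlt _ _ h _ hx' _ hx)) with h | h
  · obtain ⟨φ, hφ, hadj⟩ := h
    exact absurd ⟨φ, fun i j hij => hWlt i j hij _ (hφ i) _ (hφ j), hadj⟩ hG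
  · obtain ⟨i, j, A, hA, B, hB, hAB, hAc, hBc, hh⟩ := h
    have hle : δ / (2 * k) * S.card ≤ δ * ((S.card / k : ℕ) : ℝ) := by
      rw [div_mul_eq_mul_div, div_le_iff₀ (by positivity)]
      nlinarith
    exact ⟨A, hA.trans (hWS _), B, hB.trans (hWS _), hAB, hle.trans hAc, hle.trans hBc, hh⟩

def RodlP {k : ℕ} (H : SimpleGraph (Fin k)) (i j : ℕ) : Prop :=
  ∃ c : ℝ, 0 < c ∧ ∀ (n : ℕ) (G : SimpleGraph (Fin n)), ¬ ContainsOrdered H G →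
    ∀ (S : Finset (Fin n)) (t : ℕ), 0 < t → (t : ℝ) ≤ c * S.card → ∃ U ⊆ S,
      (U.card = 2 ^ i * t ∧ pairCount G U U ≤ (3 / 4) ^ i * (U.card : ℝ) ^ 2) ∨
      (U.card = 2 ^ j * t ∧ pairCount Gᶜ U U ≤ (3 / 4) ^ j * (U.card : ℝ) ^ 2)

theorem rodlP_base_aux {n : ℕ} (G : SimpleGraph (Fin n)) (S : Finset (Fin n)) (t : ℕ)
    (ht : (t : ℝ) ≤ 1 * S.card) : ∃ U ⊆ S, U.card = 2 ^ 0 * t ∧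
      pairCount G U U ≤ (3 / 4) ^ 0 * (U.card : ℝ) ^ 2 ∧ 
      pairCount Gᶜ U U ≤ (3 / 4) ^ 0 * (U.card : ℝ) ^ 2 := by
  rw [one_mul] at ht
  obtain ⟨U, hU, hc⟩ := Finset.exists_subset_card_eq (by exact_mod_cast ht : t ≤ S.card)
  have h1 := pairCount_add_compl G U
  have h2 := pairCount_nonneg G U U
  have h3 := pairCount_nonneg Gᶜ U U
  have h4 : (0 : ℝ) ≤ U.card := Nat.cast_nonneg _
  refine ⟨U, hU, by simpa using hc, ?_, ?_⟩ <;> simp only [pow_zero, one_mul] <;> linarith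

theorem rodlP_step {k : ℕ} (H : SimpleGraph (Fin k)) (i j : ℕ) (h1 : RodlP H i (j + 1))
    (h2 : RodlP H (i + 1) j) : RodlP H (i + 1) (j + 1) := by
  obtain ⟨c1, hc1, h1⟩ := h1
  obtain ⟨c2, hc2, h2⟩ := h2
  set β : ℝ := min ((3 / 4) ^ i) ((3 / 4) ^ j) / 4 with hβdef
  have hβ : 0 < β := by positivity
  have hβi : 4 * β ≤ (3 / 4) ^ i := by
    have := min_le_left ((3 / 4 : ℝ) ^ i) ((3 / 4) ^ j); rw [hβdef]; linarith
  have hβj : 4 * β ≤ (3 / 4) ^ j := by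
    have := min_le_right ((3 / 4 : ℝ) ^ i) ((3 / 4) ^ j); rw [hβdef]; linarith
  obtain ⟨δ, hδ, hp⟩ := pair_lemma k H β hβ
  refine ⟨min (1 / (k + 1)) (min (δ * c1 / 2) (δ * c2 / 2)), by positivity, ?_⟩
  intro n G hG S t ht htc
  have hS0 : (0 : ℝ) ≤ S.card := Nat.cast_nonneg _
  have ht1 : (1 : ℝ) ≤ t := by exact_mod_cast ht
  have e1 : (t : ℝ) ≤ 1 / (k + 1) * S.card :=
    htc.trans (mul_le_mul_of_nonneg_right (min_le_left _ _) hS0)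
  have e2 : (t : ℝ) ≤ δ * c1 / 2 * S.card :=
    htc.trans (mul_le_mul_of_nonneg_right ((min_le_right _ _).trans (min_le_left _ _)) hS0)
  have e3 : (t : ℝ) ≤ δ * c2 / 2 * S.card :=
    htc.trans (mul_le_mul_of_nonneg_right ((min_le_right _ _).trans (min_le_right _ _)) hS0)
  have hkS : k ≤ S.card := by
    rw [div_mul_eq_mul_div, le_div_iff₀ (by positivity)] at e1
    have : (k : ℝ) ≤ S.card := by nlinarith [(Nat.cast_nonneg k : (0 : ℝ) ≤ k)]
    exact_mod_cast this
  obtain ⟨A, hA, B, hB, hAB, hAc, hBc, hh⟩ := hp n G hG S hkS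
  have hAB' : A.disjUnion B hAB ⊆ S := by
    classical
    rw [Finset.disjUnion_eq_union]
    exact Finset.union_subset hA hB
  by_contra hcon
  push Not at hcon
  rcases hh with hh | hh
  · have sub : ∀ T ⊆ S, δ * S.card / 2 ≤ T.card → ∃ U ⊆ T, U.card = 2 ^ i * t ∧
        pairCount G U U ≤ (3 / 4) ^ i * ((2 ^ i * t : ℕ) : ℝ) ^ 2 := by
      intro T hT hTc
      obtain ⟨U, hU, h | h⟩ := h1 n G hG T t ht (by nlinarith)
      · exact ⟨U, hU, h.1, by rw [← h.1]; exact h.2⟩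
      · exact absurd h.2 (not_le.2 ((hcon U (hU.trans hT)).2 h.1))
    obtain ⟨U, hU, hUc, hUd⟩ := combine_step G A B hAB β ((3 / 4) ^ i) hβ hβi (by positivity)
      (2 ^ i * t) (by positivity) hh (sub A hA (by nlinarith))
      (fun B₀ hB₀ hB₀c => sub B₀ (hB₀.trans hB) (by linarith))
    refine absurd ?_ (not_le.2 ((hcon U (hU.trans hAB')).1 (by rw [hUc]; ring)))
    refine hUd.trans (le_of_eq ?_)
    rw [hUc]; push_cast; ring
  · have sub : ∀ T ⊆ S, δ * S.card / 2 ≤ T.card → ∃ U ⊆ T, U.card = 2 ^ j * t ∧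
        pairCount Gᶜ U U ≤ (3 / 4) ^ j * ((2 ^ j * t : ℕ) : ℝ) ^ 2 := by
      intro T hT hTc
      obtain ⟨U, hU, h | h⟩ := h2 n G hG T t ht (by nlinarith)
      · exact absurd h.2 (not_le.2 ((hcon U (hU.trans hT)).1 h.1))
      · exact ⟨U, hU, h.1, by rw [← h.1]; exact h.2⟩
    obtain ⟨U, hU, hUc, hUd⟩ := combine_step Gᶜ A B hAB β ((3 / 4) ^ j) hβ hβj (by positivity)
      (2 ^ j * t) (by positivity) hh (sub A hA (by nlinarith))
      (fun B₀ hB₀ hB₀c => sub B₀ (hB₀.trans hB) (by linarith))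
    refine absurd ?_ (not_le.2 ((hcon U (hU.trans hAB')).2 (by rw [hUc]; ring)))
    refine hUd.trans (le_of_eq ?_)
    rw [hUc]; push_cast; ring

theorem rodlP_all {k : ℕ} (H : SimpleGraph (Fin k)) (i j : ℕ) : RodlP H i j := by
  induction i generalizing j with
  | zero =>
    refine ⟨1, one_pos, fun n G hG S t ht htc => ?_⟩
    obtain ⟨U, hU, h, h', -⟩ := rodlP_base_aux G S t htc
    exact ⟨U, hU, Or.inl ⟨h, h'⟩⟩
  | succ i ih =>
    induction j with
    | zero =>
      refine ⟨1, one_pos, fun n G hG S t ht htc => ?_⟩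
      obtain ⟨U, hU, h, -, h'⟩ := rodlP_base_aux G S t htc
      exact ⟨U, hU, Or.inr ⟨h, h'⟩⟩
    | succ j ihj => exact rodlP_step H i j (ih (j + 1)) ihj

theorem conv_aux (u : ℕ) (D ε : ℝ) (hε : 0 < ε) (h1 : D ≤ (u : ℝ) ^ 2 - u)
    (h2 : D ≤ ε / 2 * (u : ℝ) ^ 2) : D ≤ ε * ((u : ℝ) ^ 2 - u) := by
  rcases Nat.lt_or_ge u 2 with h | h
  · interval_cases u <;> norm_num at * <;> linarith
  · have h' : (2 : ℝ) ≤ u := by exact_mod_cast h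
    have : (u : ℝ) ^ 2 / 2 ≤ (u : ℝ) ^ 2 - u := by nlinarith
    nlinarith

theorem final_aux {n : ℕ} (G : SimpleGraph (Fin n)) (U : Finset (Fin n)) (ε : ℝ) (hε : 0 < ε)
    (h : pairCount G U U ≤ ε / 2 * (U.card : ℝ) ^ 2 ∨
      pairCount Gᶜ U U ≤ ε / 2 * (U.card : ℝ) ^ 2) :
    ((edgeCountIn G U : ℝ) ≤ ε * (U.card.choose 2 : ℝ) ∨
            (1 - ε) * (U.card.choose 2 : ℝ) ≤ (edgeCountIn G U : ℝ)) := by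
  have h0 := two_edgeCountIn G U
  have h1 := pairCount_add_compl G U
  have h2 := pairCount_nonneg G U U
  have h3 := pairCount_nonneg Gᶜ U U
  have h4 : (U.card.choose 2 : ℝ) = ((U.card : ℝ) ^ 2 - U.card) / 2 := by
    rw [Nat.cast_choose_two]; ring
  rw [h4]
  rcases h with h | h
  · left
    have := conv_aux U.card _ ε hε (by linarith) h
    linarith
  · right
    have := conv_aux U.card _ ε hε (by linarith) h
    linarith

/-- For every ordered graph `H` and every `ε > 0` there is `c₀ > 0` such that every
ordered graph `G` on `n` vertices with no induced ordered copy of `H` has a subset `U` of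
at least `c₀·n` vertices inducing at most `ε·C(|U|,2)` or at least `(1−ε)·C(|U|,2)` edges. -/
theorem ordered_induced_Rodl (k : ℕ) (H : SimpleGraph (Fin k)) (ε : ℝ) (hε : 0 < ε) :
    ∃ c₀ : ℝ, 0 < c₀ ∧
      ∀ (n : ℕ) (G : SimpleGraph (Fin n)),
        ¬ ContainsOrdered H G →
        ∃ U : Finset (Fin n), c₀ * n ≤ (U.card : ℝ) ∧
          ((edgeCountIn G U : ℝ) ≤ ε * (U.card.choose 2 : ℝ) ∨
            (1 - ε) * (U.card.choose 2 : ℝ) ≤ (edgeCountIn G U : ℝ)) := by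
  obtain ⟨i, hi⟩ := exists_pow_lt_of_lt_one (by positivity : 0 < ε / 2)
    (by norm_num : (3 / 4 : ℝ) < 1)
  obtain ⟨c, hc, hP⟩ := rodlP_all H i i
  refine ⟨c / 2, by positivity, fun n G hG => ?_⟩
  rcases Nat.eq_zero_or_pos n with rfl | hn
  · refine ⟨∅, by simp, final_aux G ∅ ε hε (Or.inl ?_)⟩
    simp [pairCount]
  rcases Nat.eq_zero_or_pos ⌊c * n⌋₊ with ht | ht
  · have h1 : c * n < 1 := Nat.floor_eq_zero.1 ht
    refine ⟨{⟨0, hn⟩}, by simp; linarith, final_aux G _ ε hε (Or.inl ?_)⟩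
    have h2 := pairCount_add_compl G {⟨0, hn⟩}
    have h3 := pairCount_nonneg Gᶜ {⟨0, hn⟩} {⟨0, hn⟩}
    simp only [Finset.card_singleton, Nat.cast_one] at h2 ⊢
    linarith
  · obtain ⟨U, -, hU⟩ := hP n G hG Finset.univ ⌊c * n⌋₊ ht (by
      simpa using Nat.floor_le (by positivity))
    have hcard : U.card = 2 ^ i * ⌊c * n⌋₊ := by
      rcases hU with h | h <;> exact h.1
    refine ⟨U, ?_, final_aux G U ε hε ?_⟩
    · have h1 : ⌊c * n⌋₊ ≤ U.card := by
        rw [hcard]; exact Nat.le_mul_of_pos_left _ (by positivity)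
      have h2 : (⌊c * n⌋₊ : ℝ) ≤ U.card := by exact_mod_cast h1
      have h3 := Nat.lt_floor_add_one (c * n)
      have h4 : (1 : ℝ) ≤ ⌊c * n⌋₊ := by exact_mod_cast ht
      linarith
    · rcases hU with h | h
      · left
        exact h.2.trans (mul_le_mul_of_nonneg_right hi.le (by positivity))
      · right
        exact h.2.trans (mul_le_mul_of_nonneg_right hi.le (by positivity))
end

section
/- For every ordered graph H_< there exists an unordered graph H' with the property that for every linear order ≺ on the vertex set of H', the ordered graph H'_≺ contains H_< as an induced ordered subgraph. -/
/-- Polynomial versus exponential growth. -/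
lemma rw_growth (k q : ℕ) (hq : 1 ≤ q) :
    ∃ p : ℕ, p.Prime ∧ k ≤ p ∧ (k * p) ^ (k * p) * (q - 1) ^ (p * p) < q ^ (p * p) := by
  have hq0 : (0 : ℝ) < q := by exact_mod_cast hq
  have hr : |((q - 1 : ℕ) : ℝ) / q| < 1 := by
    rw [abs_of_nonneg (by positivity), div_lt_one hq0]
    exact_mod_cast (by omega : q - 1 < q)
  have h1 := (tendsto_pow_const_mul_const_pow_of_abs_lt_one k hr).const_mul ((k : ℝ) ^ k)
  rw [mul_zero] at h1
  have h2 := h1.eventually (gt_mem_nhds (zero_lt_one))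
  obtain ⟨N, hN⟩ := Filter.eventually_atTop.1 h2
  obtain ⟨p, hp, hpp⟩ := Nat.exists_infinite_primes (max N k)
  refine ⟨p, hpp, le_trans (le_max_right _ _) hp, ?_⟩
  have h3 := hN p (le_trans (le_max_left _ _) hp)
  have h4 : (k * p) ^ k * (q - 1) ^ p < q ^ p := by
    have : ((k : ℝ) * p) ^ k * ((q - 1 : ℕ) : ℝ) ^ p < (q : ℝ) ^ p := by
      rw [div_pow, ← mul_assoc, ← mul_div_assoc, ← mul_pow,
        div_lt_one (by positivity)] at h3
      exact h3
    exact_mod_cast this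
  have h5 := Nat.pow_lt_pow_left h4 hpp.ne_zero
  rwa [mul_pow, ← pow_mul, ← pow_mul, ← pow_mul] at h5

/-- The point with first coordinate `i` on the line with parameters `l`. -/
def rwLine (k p : ℕ) (l : ZMod p × ZMod p) (i : Fin k) : Fin k × ZMod p :=
  (i, l.1 * ((i : ℕ) : ZMod p) + l.2)

lemma rwLine_linear (k p : ℕ) (hp : p.Prime) (hk : k ≤ p) (l l' : ZMod p × ZMod p)
    (i j i' j' : Fin k) (hij : i ≠ j) (h1 : rwLine k p l i = rwLine k p l' i')
    (h2 : rwLine k p l j = rwLine k p l' j') : l = l' := by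
  have : Fact p.Prime := ⟨hp⟩
  obtain ⟨a, b⟩ := l
  obtain ⟨a', b'⟩ := l'
  simp only [rwLine, Prod.mk.injEq] at h1 h2
  obtain ⟨rfl, h1⟩ := h1
  obtain ⟨rfl, h2⟩ := h2
  have hne : ((i : ℕ) : ZMod p) - ((j : ℕ) : ZMod p) ≠ 0 := by
    intro h
    rw [sub_eq_zero, ZMod.natCast_eq_natCast_iff] at h
    exact hij (Fin.ext (Nat.ModEq.eq_of_lt_of_lt h (by omega) (by omega)))
  have ha : a = a' := by
    have : (a - a') * (((i : ℕ) : ZMod p) - ((j : ℕ) : ZMod p)) = 0 := by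
      linear_combination h1 - h2
    rcases mul_eq_zero.1 this with h | h
    · exact sub_eq_zero.1 h
    · exact absurd h hne
  subst ha
  simpa using h1

/-- Choice of permutations by counting. -/
lemma rw_choice {F L P : Type} [Fintype F] [Fintype L] [Fintype P] [DecidableEq P]
    [DecidableEq L] (s : F → L → P)
    (h : Fintype.card F * (Fintype.card P - 1) ^ Fintype.card L
      < Fintype.card P ^ Fintype.card L) :
    ∃ c : L → P, ∀ f, ∃ l, s f l = c l := by
  classical
  by_contra! hc
  have hsub : (Finset.univ : Finset (L → P)) ⊆
      Finset.univ.biUnion (fun f : F => Fintype.piFinset (fun l => Finset.univ.erase (s f l))) := by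
    intro c _
    obtain ⟨f, hf⟩ := hc c
    simp only [Finset.mem_biUnion, Finset.mem_univ, true_and, Fintype.mem_piFinset,
      Finset.mem_erase, and_true]
    exact ⟨f, fun l => (hf l).symm⟩
  have h1 := (Finset.card_le_card hsub).trans Finset.card_biUnion_le
  simp [Fintype.card_piFinset, Finset.card_erase_of_mem] at h1
  omega

theorem rodl_winkler (k : ℕ) (H : SimpleGraph (Fin k)) :
    ∃ (m : ℕ) (H' : SimpleGraph (Fin m)),
      ∀ r : Fin m → Fin m → Prop, IsStrictTotalOrder (Fin m) r →
        ∃ φ : Fin k → Fin m,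
          (∀ u v : Fin k, u < v → r (φ u) (φ v)) ∧
          ∀ u v : Fin k, H.Adj u v ↔ H'.Adj (φ u) (φ v) := by
  classical
  obtain ⟨p, hp, hk, hlt⟩ := rw_growth k k.factorial (Nat.succ_le_of_lt k.factorial_pos)
  have : Fact p.Prime := ⟨hp⟩
  have : NeZero p := ⟨hp.ne_zero⟩
  have hcard : Fintype.card (Fin k × ZMod p) = k * p := by simp [ZMod.card]
  let E : Fin k × ZMod p ≃ Fin (k * p) := Fintype.equivFinOfCardEq hcard
  let ln : ZMod p × ZMod p → Fin k → Fin (k * p) := fun l i => E (rwLine k p l i)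
  obtain ⟨c, hc⟩ := rw_choice (F := Fin (k * p) → Fin (k * p)) (L := ZMod p × ZMod p)
    (P := Equiv.Perm (Fin k)) (fun f l => Tuple.sort (fun i => f (ln l i)))
    (by simpa [ZMod.card, Fintype.card_perm] using hlt)
  let e : ZMod p × ZMod p → Fin k → Fin (k * p) := fun l i => ln l (c l i)
  have einj : ∀ l i j, e l i = e l j → i = j := by
    intro l i j h
    have h' := E.injective h
    simp only [rwLine, Prod.mk.injEq] at h'
    exact (c l).injective h'.1
  have elin : ∀ l l' i j i' j', i ≠ j → e l i = e l' i' → e l j = e l' j' → l = l' := by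
    intro l l' i j i' j' hij h1 h2
    exact rwLine_linear k p hp hk l l' _ _ _ _ (fun h => hij ((c l).injective h))
      (E.injective h1) (E.injective h2)
  let G : SimpleGraph (Fin (k * p)) :=
    { Adj := fun u v => ∃ l i j, H.Adj i j ∧ u = e l i ∧ v = e l j
      symm := ⟨by
        rintro u v ⟨l, i, j, h, hu, hv⟩
        exact ⟨l, j, i, h.symm, hv, hu⟩⟩
      loopless := ⟨by
        rintro u ⟨l, i, j, h, hu, hv⟩
        exact h.ne (einj l i j (hu.symm.trans hv))⟩ }
  refine ⟨k * p, G, ?_⟩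
  intro r hr
  let f : Fin (k * p) → Fin (k * p) := fun v =>
    ⟨(Finset.univ.filter (fun u => r u v)).card, by
      have : (Finset.univ.filter (fun u => r u v)) ⊂ Finset.univ := by
        rw [Finset.filter_ssubset]
        exact ⟨v, Finset.mem_univ _, irrefl_of r v⟩
      simpa using Finset.card_lt_card this⟩
  have hf : ∀ u v, r u v → f u < f v := by
    intro u v huv
    change (Finset.univ.filter (fun w => r w u)).card < (Finset.univ.filter (fun w => r w v)).card
    apply Finset.card_lt_card
    rw [Finset.ssubset_iff_of_subset]
    · exact ⟨u, by simpa using huv, by simpa using irrefl_of r u⟩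
    · intro w hw
      simp only [Finset.mem_filter, Finset.mem_univ, true_and] at hw ⊢
      exact trans_of r hw huv
  obtain ⟨l, hl⟩ := hc f
  have hmono : Monotone (fun i => f (e l i)) := by
    have := Tuple.monotone_sort (fun i => f (ln l i))
    rw [hl] at this
    exact this
  refine ⟨e l, ?_, ?_⟩
  · intro u v huv
    rcases trichotomous_of r (e l u) (e l v) with h | h | h
    · exact h
    · exact absurd (einj l u v h) huv.ne
    · exact absurd (hf _ _ h) (not_lt.2 (hmono huv.le))
  · intro u v
    constructor
    · intro h
      exact ⟨l, u, v, h, rfl, rfl⟩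
    · rintro ⟨l', i, j, h, hu, hv⟩
      obtain rfl := elin l' l i j u v h.ne hu.symm hv.symm
      rw [einj _ _ _ hu, einj _ _ _ hv]
      exact h
end

section
/- Let H_< be an ordered graph and let δ > 0. Then there exists a constant c₂ = c₂(H_<, δ) > 0 such that every ordered graph G_< on n vertices that does not contain H_< as an induced ordered subgraph has the following property: there is a subset U of the vertex set of G with |U| ≥ c₂·n such that the maximum degree of G[U] is at most δ·|U|, or the maximum degree of the complement of G[U] is at most δ·|U|. -/
/-- The degree of `v` in the subgraph of `G` induced by `U`. -/
noncomputable def degIn {V : Type*} (G : SimpleGraph V) (U : Finset V) (v : V) : ℕ :=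
  {w : V | w ∈ U ∧ G.Adj v w}.ncard

open Finset Classical in
/-- Number of ordered adjacent pairs inside `U`. -/
noncomputable def edgeCt {V : Type*} (G : SimpleGraph V) (U : Finset V) : ℕ :=
  ∑ v ∈ U, (U.filter (fun w => G.Adj v w)).card

/-- `S` contains sparse subsets of all sizes up to `c |S|`. -/
def Sparse {V : Type*} (G : SimpleGraph V) (S : Finset V) (ε c : ℝ) : Prop :=
  ∀ m : ℕ, (m : ℝ) ≤ c * S.card → ∃ U ⊆ S, U.card = m ∧ (edgeCt G U : ℝ) ≤ ε * (m : ℝ) ^ 2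

lemma Sparse.mono {V : Type*} {G : SimpleGraph V} {S T : Finset V} {ε c d : ℝ}
    (h : Sparse G S ε c) (hST : S ⊆ T) (hc : d * T.card ≤ c * S.card) : Sparse G T ε d := by
  intro m hm
  obtain ⟨U, hU, h1, h2⟩ := h m (hm.trans hc)
  exact ⟨U, hU.trans hST, h1, h2⟩

lemma sparse_base {V : Type*} (G : SimpleGraph V) (S : Finset V) : Sparse G S 1 1 := by
  classical
  intro m hm
  have hm' : m ≤ S.card := by
    rw [one_mul] at hm; exact_mod_cast hm
  obtain ⟨U, hU, h1⟩ := Finset.exists_subset_card_eq hm'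
  refine ⟨U, hU, h1, ?_⟩
  have : edgeCt G U ≤ m ^ 2 := by
    unfold edgeCt
    calc _ ≤ ∑ v ∈ U, U.card := Finset.sum_le_sum fun v _ => Finset.card_filter_le _ _
      _ = m ^ 2 := by simp [h1, sq]
  rw [one_mul]
  exact_mod_cast this


open Finset Classical in
lemma edgeCt_union {V : Type*} (G : SimpleGraph V) (A B : Finset V) (hAB : Disjoint A B) :
    edgeCt G (A ∪ B) = edgeCt G A + edgeCt G B
      + 2 * ∑ w ∈ B, (A.filter (fun v => G.Adj w v)).card := by
  have hsw : ∑ v ∈ A, (B.filter (fun w => G.Adj v w)).card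
      = ∑ w ∈ B, (A.filter (fun v => G.Adj w v)).card := by
    simp only [Finset.card_filter]
    rw [Finset.sum_comm]
    simp only [G.adj_comm]
  have hf : ∀ v, ((A ∪ B).filter (fun w => G.Adj v w)).card =
      (A.filter (fun w => G.Adj v w)).card + (B.filter (fun w => G.Adj v w)).card := by
    intro v
    rw [Finset.filter_union, Finset.card_union_of_disjoint]
    exact Finset.disjoint_filter_filter hAB
  unfold edgeCt
  rw [Finset.sum_union hAB]
  simp only [hf, Finset.sum_add_distrib]
  rw [hsw]
  ring

open Finset Classical in
/-- Combining two sparse sets with few edges across. -/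
lemma combine {V : Type*} (G : SimpleGraph V) (A B : Finset V) (ε c : ℝ) (m : ℕ)
    (hε : 0 < ε) (hc : 0 < c) (hAB : Disjoint A B)
    (hd : ∀ v ∈ A, ((B.filter (fun w => G.Adj v w)).card : ℝ) ≤ ε / 16 * B.card)
    (hA : Sparse G A (3 / 2 * ε) c)
    (hB : ∀ B' ⊆ B, (B.card : ℝ) ≤ 2 * B'.card → Sparse G B' (3 / 2 * ε) c)
    (hmA : (m : ℝ) ≤ c * A.card) (hmB : 2 * (m : ℝ) ≤ c * B.card) :
    ∃ U ⊆ A ∪ B, U.card = m ∧ (edgeCt G U : ℝ) ≤ ε * (m : ℝ) ^ 2 := by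
  rcases Nat.lt_or_ge m 2 with hm | hm
  · interval_cases m
    · exact ⟨∅, by simp, by simp, by simp [edgeCt]⟩
    · have : A.Nonempty := by
        rw [Finset.nonempty_iff_ne_empty]; rintro rfl
        norm_num at hmA
      obtain ⟨x, hx⟩ := this
      refine ⟨{x}, by simp [hx], by simp, ?_⟩
      simp [edgeCt, Finset.filter_singleton, hε.le]
  obtain ⟨a, b, hab, h1, h2, ha⟩ : ∃ a b : ℕ, a + b = m ∧ b ≤ a ∧ a ≤ b + 1 ∧ 0 < a :=
    ⟨(m + 1) / 2, m / 2, by omega, by omega, by omega, by omega⟩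
  have ham : (a : ℝ) ≤ m := by exact_mod_cast (by omega : a ≤ m)
  have hbm : (b : ℝ) ≤ m := by exact_mod_cast (by omega : b ≤ m)
  have ha' : (0 : ℝ) < a := by exact_mod_cast ha
  obtain ⟨A', hA', hA'c, hA'e⟩ := hA a (ham.trans hmA)
  set B' := B.filter (fun w => ((A'.filter (fun v => G.Adj w v)).card : ℝ) ≤ ε / 8 * a) with hB'
  have hsw : ∑ w ∈ B, (A'.filter (fun v => G.Adj w v)).card
      = ∑ v ∈ A', (B.filter (fun w => G.Adj v w)).card := by
    simp only [Finset.card_filter]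
    rw [Finset.sum_comm]
    simp only [G.adj_comm]
  have hup : (∑ w ∈ B, ((A'.filter (fun v => G.Adj w v)).card : ℝ)) ≤ a * (ε / 16 * B.card) := by
    have : (∑ w ∈ B, ((A'.filter (fun v => G.Adj w v)).card : ℝ))
      = ∑ v ∈ A', ((B.filter (fun w => G.Adj v w)).card : ℝ) := by exact_mod_cast hsw
    rw [this]
    calc _ ≤ ∑ v ∈ A', ε / 16 * (B.card : ℝ) := Finset.sum_le_sum fun v hv => hd v (hA' hv)
      _ = _ := by simp [hA'c]
  have hlow : ((B \ B').card : ℝ) * (ε / 8 * a)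
      ≤ ∑ w ∈ B, ((A'.filter (fun v => G.Adj w v)).card : ℝ) := by
    calc ((B \ B').card : ℝ) * (ε / 8 * a) = ∑ w ∈ B \ B', (ε / 8 * a) := by simp
      _ ≤ ∑ w ∈ B \ B', ((A'.filter (fun v => G.Adj w v)).card : ℝ) := by
        apply Finset.sum_le_sum
        intro w hw
        rw [Finset.mem_sdiff, hB', Finset.mem_filter] at hw
        by_contra hcon
        exact hw.2 ⟨hw.1, (not_le.1 hcon).le⟩
      _ ≤ _ := Finset.sum_le_sum_of_subset_of_nonneg Finset.sdiff_subset
          (fun _ _ _ => by positivity)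
  have hB'B : B' ⊆ B := Finset.filter_subset _ _
  have hcard : ((B \ B').card : ℝ) + B'.card = B.card := by
    exact_mod_cast Finset.card_sdiff_add_card_eq_card hB'B
  have hhalf : (B.card : ℝ) ≤ 2 * B'.card := by
    have h3 : ((B \ B').card : ℝ) * (ε * a) ≤ (B.card / 2 : ℝ) * (ε * a) := by
      nlinarith [hlow.trans hup]
    have := le_of_mul_le_mul_right h3 (by positivity)
    linarith
  obtain ⟨B'', hB'', hB''c, hB''e⟩ := hB B' hB'B hhalf b (by nlinarith)
  have hdis : Disjoint A' B'' := Finset.disjoint_of_subset_left hA'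
    (Finset.disjoint_of_subset_right (hB''.trans hB'B) hAB)
  refine ⟨A' ∪ B'', Finset.union_subset_union hA' (hB''.trans hB'B), ?_, ?_⟩
  · rw [Finset.card_union_of_disjoint hdis, hA'c, hB''c, hab]
  have hcross : (∑ w ∈ B'', ((A'.filter (fun v => G.Adj w v)).card : ℝ)) ≤ b * (ε / 8 * a) := by
    calc _ ≤ ∑ w ∈ B'', (ε / 8 * a) := Finset.sum_le_sum fun w hw => by
          have := hB'' hw
          rw [hB', Finset.mem_filter] at this
          exact this.2
      _ = _ := by simp [hB''c]
  rw [edgeCt_union G A' B'' hdis]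
  push_cast
  have hmr : (m : ℝ) = a + b := by exact_mod_cast hab.symm
  have hkey : (3 / 2) * ((a : ℝ) ^ 2 + b ^ 2) + a * b / 4 ≤ (m : ℝ) ^ 2 := by
    have e1 : (b : ℝ) ≤ a := by exact_mod_cast h1
    have e2 : (a : ℝ) ≤ b + 1 := by exact_mod_cast h2
    have e3 : (2 : ℝ) ≤ a + b := by rw [← hmr]; exact_mod_cast hm
    rw [hmr]
    nlinarith [mul_nonneg (sub_nonneg.2 e1) (sub_nonneg.2 e2)]
  nlinarith [mul_le_mul_of_nonneg_left hkey hε.le]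

open Finset Classical in
/-- Greedy embedding. -/
lemma greedy (ε : ℝ) (hε : 0 < ε) (hε1 : ε ≤ 1) : ∀ k : ℕ, ∃ c : ℝ, 0 < c ∧ c ≤ 1 ∧
    ∀ (H : SimpleGraph (Fin k)) (n : ℕ) (G : SimpleGraph (Fin n)) (s : ℝ) (P : Fin k → Finset (Fin n)),
      0 < s → (∀ i, s ≤ (P i).card) → (∀ i j, i < j → ∀ x ∈ P i, ∀ y ∈ P j, x < y) →
      (∃ φ : Fin k → Fin n, (∀ i, φ i ∈ P i) ∧ ∀ u v : Fin k, u < v → (H.Adj u v ↔ G.Adj (φ u) (φ v))) ∨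
      ∃ i j, i < j ∧ ∃ A ⊆ P i, ∃ B ⊆ P j, c * s ≤ A.card ∧ c * s ≤ B.card ∧
        ((∀ v ∈ A, ((B.filter (fun w => G.Adj v w)).card : ℝ) ≤ ε * B.card) ∨
         (∀ v ∈ A, ((B.filter (fun w => ¬ G.Adj v w)).card : ℝ) ≤ ε * B.card)) := by
  intro k
  induction k with
  | zero => exact ⟨1, one_pos, le_rfl, fun H n G s P _ _ _ => Or.inl ⟨fun i => i.elim0, fun i => i.elim0, fun i => i.elim0⟩⟩
  | succ k ih =>
    obtain ⟨c, hc, hc1, ih⟩ := ih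
    refine ⟨min (ε * c) (1 / (k + 1)), by positivity, ?_, ?_⟩
    · exact (min_le_left _ _).trans (by nlinarith)
    intro H n G s P hs hP hord
    by_cases hgood : ∃ v ∈ P 0, ∀ j : Fin k, ε * (P j.succ).card
        ≤ (((P j.succ).filter (fun w => H.Adj 0 j.succ ↔ G.Adj v w)).card : ℝ)
    · obtain ⟨v, hv, hj⟩ := hgood
      rcases ih (H.comap Fin.succ) n G (ε * s)
        (fun j => (P j.succ).filter (fun w => H.Adj 0 j.succ ↔ G.Adj v w)) (by positivity)
        (fun j => (mul_le_mul_of_nonneg_left (hP j.succ) hε.le).trans (hj j))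
        (fun i j hij x hx y hy => hord i.succ j.succ (Fin.succ_lt_succ_iff.2 hij) x
          (Finset.mem_filter.1 hx).1 y (Finset.mem_filter.1 hy).1) with ⟨φ, h1, h2⟩ | ⟨i, j, hij, A, hA, B, hB, hAc, hBc, h⟩
      · left
        refine ⟨Fin.cons v φ, ?_, ?_⟩
        · intro i
          refine Fin.cases ?_ (fun i => ?_) i
          · simpa using hv
          · simpa using (Finset.mem_filter.1 (h1 i)).1
        · intro u w
          refine Fin.cases ?_ (fun u => ?_) u
          · refine Fin.cases ?_ (fun w => ?_) w
            · intro h; exact absurd h (lt_irrefl _)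
            · intro _
              simpa using (Finset.mem_filter.1 (h1 w)).2
          · refine Fin.cases ?_ (fun w => ?_) w
            · intro h; exact absurd h (Fin.not_lt_zero _)
            · intro h
              simpa using h2 u w (Fin.succ_lt_succ_iff.1 h)
      · right
        have hle : min (ε * c) (1 / ((k : ℝ) + 1)) * s ≤ c * (ε * s) := by
          have := mul_le_mul_of_nonneg_right (min_le_left (ε * c) (1 / ((k : ℝ) + 1))) hs.le
          linarith
        exact ⟨i.succ, j.succ, Fin.succ_lt_succ_iff.2 hij, A, hA.trans (Finset.filter_subset _ _),
          B, hB.trans (Finset.filter_subset _ _), hle.trans hAc, hle.trans hBc, h⟩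
    · right
      push Not at hgood
      have hk : 0 < (P 0).card := by
        have := hP 0
        exact_mod_cast hs.trans_le this
      obtain ⟨v0, hv0⟩ := Finset.card_pos.1 hk
      have hkpos : 0 < k := (hgood v0 hv0).choose.pos
      haveI : Nonempty (Fin k) := ⟨(hgood v0 hv0).choose⟩
      choose! f hf using hgood
      have hpig : ∃ j : Fin k, (s / k : ℝ) ≤ ((P 0).filter (fun v => f v = j)).card := by
        by_contra hcon
        push Not at hcon
        have e1 : (P 0).card = ∑ j : Fin k, ((P 0).filter (fun v => f v = j)).card :=
          Finset.card_eq_sum_card_fiberwise (fun _ _ => Finset.mem_coe.2 (Finset.mem_univ _))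
        have e2 : ((P 0).card : ℝ) = ∑ j : Fin k, (((P 0).filter (fun v => f v = j)).card : ℝ) := by
          exact_mod_cast e1
        have e3 : (∑ j : Fin k, (((P 0).filter (fun v => f v = j)).card : ℝ)) < ∑ j : Fin k, (s / k : ℝ) :=
          Finset.sum_lt_sum_of_nonempty ⟨f v0, Finset.mem_univ _⟩ (fun j _ => hcon j)
        have e4 : (∑ j : Fin k, (s / k : ℝ)) = s := by
          have : (k : ℝ) ≠ 0 := by positivity
          simp; field_simp
        have := hP 0
        linarith
      obtain ⟨j, hj⟩ := hpig
      refine ⟨0, j.succ, Fin.succ_pos j, (P 0).filter (fun v => f v = j), Finset.filter_subset _ _,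
        P j.succ, subset_rfl, ?_, ?_, ?_⟩
      · refine le_trans ?_ hj
        have hk' : (0 : ℝ) < k := by exact_mod_cast hkpos
        calc _ ≤ (1 / ((k : ℝ) + 1)) * s := mul_le_mul_of_nonneg_right (min_le_right _ _) hs.le
          _ ≤ (1 / (k : ℝ)) * s := by gcongr; linarith
          _ = s / k := by ring
      · refine le_trans ?_ (hP _)
        have : min (ε * c) (1 / ((k : ℝ) + 1)) ≤ 1 := (min_le_left _ _).trans (by nlinarith)
        nlinarith
      · by_cases hH : H.Adj 0 j.succ
        · left
          intro v hv
          obtain ⟨hv1, hv2⟩ := Finset.mem_filter.1 hv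
          have := hf v hv1
          rw [hv2] at this
          simpa [hH] using this.le
        · right
          intro v hv
          obtain ⟨hv1, hv2⟩ := Finset.mem_filter.1 hv
          have := hf v hv1
          rw [hv2] at this
          simpa [hH] using this.le

lemma split_parts {n : ℕ} (S : Finset (Fin n)) (k t : ℕ) (h : k * t ≤ S.card) :
    ∃ P : Fin k → Finset (Fin n), (∀ i, P i ⊆ S) ∧ (∀ i, (P i).card = t) ∧
      (∀ i j, i < j → ∀ x ∈ P i, ∀ y ∈ P j, x < y) := by
  classical
  have hlt : ∀ (i : Fin k) (x : Fin t), i.1 * t + x.1 < S.card := by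
    intro i x
    have h1 : (i.1 + 1) * t ≤ k * t := Nat.mul_le_mul_right _ i.2
    have h2 := x.2
    rw [Nat.add_mul] at h1
    omega
  let e := S.orderEmbOfFin rfl
  refine ⟨fun i => Finset.univ.image (fun x : Fin t => e ⟨i.1 * t + x.1, hlt i x⟩), ?_, ?_, ?_⟩
  · intro i x hx
    obtain ⟨y, _, rfl⟩ := Finset.mem_image.1 hx
    exact S.orderEmbOfFin_mem rfl _
  · intro i
    rw [Finset.card_image_of_injective]
    · simp
    · intro x y hxy
      have := e.injective hxy
      simp only [Fin.mk.injEq] at this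
      exact Fin.ext (by omega)
  · intro i j hij x hx y hy
    obtain ⟨x, _, rfl⟩ := Finset.mem_image.1 hx
    obtain ⟨y, _, rfl⟩ := Finset.mem_image.1 hy
    apply e.strictMono
    rw [Fin.mk_lt_mk]
    have h1 : (i.1 + 1) * t ≤ j.1 * t := Nat.mul_le_mul_right _ hij
    have h2 := x.2
    rw [Nat.add_mul] at h1
    omega

open Finset Classical in
lemma bip (k : ℕ) (hk : 0 < k) (H : SimpleGraph (Fin k)) (ε : ℝ) (hε : 0 < ε) (hε1 : ε ≤ 1) :
    ∃ c : ℝ, 0 < c ∧ c ≤ 1 ∧ ∀ (n : ℕ) (G : SimpleGraph (Fin n)), ¬ ContainsOrdered H G →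
      ∀ S : Finset (Fin n), k ≤ S.card → ∃ A ⊆ S, ∃ B ⊆ S, Disjoint A B ∧
        c * S.card ≤ A.card ∧ c * S.card ≤ B.card ∧
        ((∀ v ∈ A, ((B.filter (fun w => G.Adj v w)).card : ℝ) ≤ ε * B.card) ∨
         (∀ v ∈ A, ((B.filter (fun w => Gᶜ.Adj v w)).card : ℝ) ≤ ε * B.card)) := by
  obtain ⟨c, hc, hc1, hg⟩ := greedy ε hε hε1 k
  have hkr : (1 : ℝ) ≤ k := by exact_mod_cast hk
  refine ⟨c / (2 * k), by positivity, ?_, ?_⟩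
  · rw [div_le_one (by positivity)]; linarith
  intro n G hG S hS
  obtain ⟨P, hPS, hPc, hord⟩ := split_parts S k (S.card / k) (Nat.mul_div_le _ _)
  have ht : 0 < S.card / k := Nat.div_pos hS hk
  have hle : c / (2 * k) * S.card ≤ c * ((S.card / k : ℕ) : ℝ) := by
    have h1 : S.card ≤ 2 * k * (S.card / k) := by
      have := Nat.lt_mul_div_succ S.card hk
      have h2 : k * 1 ≤ k * (S.card / k) := Nat.mul_le_mul_left _ ht
      rw [Nat.mul_add] at this
      rw [Nat.mul_assoc]
      omega
    have h2 : (S.card : ℝ) ≤ 2 * k * ((S.card / k : ℕ) : ℝ) := by exact_mod_cast h1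
    calc c / (2 * k) * S.card ≤ c / (2 * k) * (2 * k * ((S.card / k : ℕ) : ℝ)) := by gcongr
      _ = _ := by field_simp
  rcases hg H n G ((S.card / k : ℕ) : ℝ) P (by exact_mod_cast ht) (fun i => by rw [hPc]) hord with
    ⟨φ, h1, h2⟩ | ⟨i, j, hij, A, hA, B, hB, hAc, hBc, h⟩
  · exfalso
    apply hG
    refine ⟨φ, fun i j hij => hord i j hij _ (h1 i) _ (h1 j), ?_⟩
    intro u v
    rcases lt_trichotomy u v with h | h | h
    · exact h2 u v h
    · subst h; simp
    · rw [H.adj_comm, G.adj_comm]; exact h2 v u h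
  · refine ⟨A, hA.trans (hPS i), B, hB.trans (hPS j), ?_, hle.trans hAc, hle.trans hBc, ?_⟩
    · rw [Finset.disjoint_left]
      intro x hx hy
      exact lt_irrefl _ (hord i j hij x (hA hx) x (hB hy))
    · refine h.imp_right fun h v hv => le_trans ?_ (h v hv)
      have : (B.filter (fun w => Gᶜ.Adj v w)) ⊆ B.filter (fun w => ¬ G.Adj v w) := by
        intro w hw
        simp only [Finset.mem_filter, SimpleGraph.compl_adj] at hw ⊢
        exact ⟨hw.1, hw.2.2⟩
      exact_mod_cast Finset.card_le_card this

open Finset Classical in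
/-- One side of the induction step. -/
lemma half_step {V : Type*} (G G' : SimpleGraph V) (S A B : Finset V) (ε ε' c c1 : ℝ)
    (hε : 0 < ε) (hc : 0 < c) (hA : A ⊆ S) (hB : B ⊆ S) (hAB : Disjoint A B)
    (hAc : c1 * S.card ≤ A.card) (hBc : c1 * S.card ≤ B.card)
    (hd : ∀ v ∈ A, ((B.filter (fun w => G.Adj v w)).card : ℝ) ≤ ε / 16 * B.card)
    (ih : ∀ T : Finset V, Sparse G T (3 / 2 * ε) c ∨ Sparse G' T ε' c) :
    Sparse G S ε (c * c1 / 2) ∨ Sparse G' S ε' (c * c1 / 2) := by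
  by_cases hG' : Sparse G' S ε' (c * c1 / 2)
  · exact Or.inr hG'
  left
  have hA1 := mul_le_mul_of_nonneg_left hAc hc.le
  have hB1 := mul_le_mul_of_nonneg_left hBc hc.le
  have hA0 : 0 ≤ c * (A.card : ℝ) := by positivity
  intro m hm
  have hm0 : (0 : ℝ) ≤ m := Nat.cast_nonneg m
  obtain ⟨U, hU, h⟩ := combine G A B ε c m hε hc hAB hd
    ((ih A).resolve_right fun h => hG' (h.mono hA (by linarith)))
    (fun B' hB' hh => (ih B').resolve_right fun h => hG' (h.mono (hB'.trans hB) (by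
      have := mul_le_mul_of_nonneg_left hh hc.le
      linarith))) (by linarith) (by linarith)
  exact ⟨U, hU.trans (Finset.union_subset hA hB), h⟩

lemma main_ind (k : ℕ) (hk : 0 < k) (H : SimpleGraph (Fin k)) : ∀ i j : ℕ,
    ∃ c : ℝ, 0 < c ∧ c ≤ 1 ∧ ∀ (n : ℕ) (G : SimpleGraph (Fin n)), ¬ ContainsOrdered H G →
      ∀ S : Finset (Fin n), Sparse G S ((2 / 3) ^ i) c ∨ Sparse Gᶜ S ((2 / 3) ^ j) c := by
  intro i
  induction i with
  | zero => exact fun j => ⟨1, one_pos, le_rfl, fun n G _ S => Or.inl (by simpa using sparse_base G S)⟩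
  | succ i ihi =>
    intro j
    induction j with
    | zero => exact ⟨1, one_pos, le_rfl, fun n G _ S => Or.inr (by simpa using sparse_base Gᶜ S)⟩
    | succ j ihj =>
      obtain ⟨c2, hc2, hc21, h2⟩ := ihi (j + 1)
      obtain ⟨c3, hc3, hc31, h3⟩ := ihj
      set c := min c2 c3 with hcdef
      have hc : 0 < c := lt_min hc2 hc3
      have hcle2 : c ≤ c2 := min_le_left _ _
      have hcle3 : c ≤ c3 := min_le_right _ _
      set ε := min ((2 / 3 : ℝ) ^ (i + 1)) ((2 / 3 : ℝ) ^ (j + 1)) / 16 with hε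
      have hε0 : 0 < ε := by positivity
      have hεi : ε ≤ (2 / 3 : ℝ) ^ (i + 1) / 16 := by
        rw [hε]; gcongr; exact min_le_left _ _
      have hεj : ε ≤ (2 / 3 : ℝ) ^ (j + 1) / 16 := by
        rw [hε]; gcongr; exact min_le_right _ _
      have hε1 : ε ≤ 1 := by
        have : (2 / 3 : ℝ) ^ (i + 1) ≤ 1 := pow_le_one₀ (by norm_num) (by norm_num)
        linarith
      obtain ⟨c1, hc1, hc11, hb⟩ := bip k hk H ε hε0 hε1
      have hkr : (1 : ℝ) ≤ k := by exact_mod_cast hk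
      have hd1 : min (c * c1 / 2) (1 / k) ≤ 1 := by
        refine (min_le_right _ _).trans ?_
        rw [div_le_one (by positivity)]; exact hkr
      refine ⟨min (c * c1 / 2) (1 / k), by positivity, hd1, ?_⟩
      intro n G hG S
      rcases Nat.lt_or_ge S.card k with hS | hS
      · left
        intro m hm
        have hS' : (S.card : ℝ) < k := by exact_mod_cast hS
        have : (m : ℝ) < 1 := by
          refine hm.trans_lt ?_
          calc _ ≤ (1 / (k : ℝ)) * S.card := by gcongr; exact min_le_right _ _
            _ < (1 / (k : ℝ)) * k := by gcongr
            _ = 1 := by field_simp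
        have hm0 : m = 0 := by
          have : m < 1 := by exact_mod_cast this
          omega
        subst hm0
        exact ⟨∅, by simp, by simp, by simp [edgeCt]⟩
      have mm : ∀ (F : SimpleGraph (Fin n)) (e : ℝ), Sparse F S e (c * c1 / 2) →
          Sparse F S e (min (c * c1 / 2) (1 / k)) := fun F e h =>
        h.mono subset_rfl (by gcongr; exact min_le_left _ _)
      have m2 : ∀ (F : SimpleGraph (Fin n)) (T : Finset (Fin n)) (e : ℝ), Sparse F T e c2 →
          Sparse F T e c := fun F T e h => h.mono subset_rfl (by gcongr)
      have m3 : ∀ (F : SimpleGraph (Fin n)) (T : Finset (Fin n)) (e : ℝ), Sparse F T e c3 →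
          Sparse F T e c := fun F T e h => h.mono subset_rfl (by gcongr)
      have hpi : (3 / 2 : ℝ) * (2 / 3) ^ (i + 1) = (2 / 3) ^ i := by rw [pow_succ]; ring
      have hpj : (3 / 2 : ℝ) * (2 / 3) ^ (j + 1) = (2 / 3) ^ j := by rw [pow_succ]; ring
      obtain ⟨A, hA, B, hB, hAB, hAc, hBc, h⟩ := hb n G hG S hS
      rcases h with h | h
      · refine (half_step G Gᶜ S A B ((2 / 3) ^ (i + 1)) ((2 / 3) ^ (j + 1)) c c1
          (by positivity) hc hA hB hAB hAc hBc
          (fun v hv => (h v hv).trans (by gcongr)) ?_).imp (mm _ _) (mm _ _)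
        intro T
        rw [hpi]
        exact (h2 n G hG T).imp (m2 _ _ _) (m2 _ _ _)
      · refine ((half_step Gᶜ G S A B ((2 / 3) ^ (j + 1)) ((2 / 3) ^ (i + 1)) c c1
          (by positivity) hc hA hB hAB hAc hBc
          (fun v hv => by
            refine le_trans (le_of_eq ?_) ((h v hv).trans
              (mul_le_mul_of_nonneg_right hεj (Nat.cast_nonneg _)))
            congr!) ?_).imp (mm _ _) (mm _ _)).symm
        intro T
        rw [hpj]
        exact ((h3 n G hG T).imp (m3 _ _ _) (m3 _ _ _)).symm

open Finset Classical in
lemma clean_up {V : Type*} (G : SimpleGraph V) (S : Finset V) (ε c δ : ℝ)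
    (hε : 0 < ε) (hc : 0 < c) (hc1 : c ≤ 1) (hεδ : 4 * ε ≤ δ) (h : Sparse G S ε c) :
    ∃ U : Finset V, c / 4 * S.card ≤ (U.card : ℝ) ∧
      ∀ v ∈ U, (degIn G U v : ℝ) ≤ δ * U.card := by
  have hdeg : ∀ (U : Finset V) (v : V), degIn G U v = (U.filter (fun w => G.Adj v w)).card := by
    intro U v
    unfold degIn
    rw [← Set.ncard_coe_finset]
    congr 1
    ext w
    simp
  rcases S.eq_empty_or_nonempty with rfl | hS
  · exact ⟨∅, by simp, by simp⟩
  rcases lt_or_ge (c * S.card) 1 with h1 | h1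
  · obtain ⟨x, hx⟩ := hS
    refine ⟨{x}, by simp; linarith, ?_⟩
    intro v hv
    rw [hdeg]
    have := Finset.mem_singleton.1 hv
    subst this
    simp [Finset.filter_singleton]
    linarith
  have hfl := Nat.floor_le (show 0 ≤ c * (S.card : ℝ) by positivity)
  have hfl2 := Nat.lt_floor_add_one (c * (S.card : ℝ))
  have hfl3 : 1 ≤ ⌊c * (S.card : ℝ)⌋₊ := Nat.one_le_floor_iff _ |>.2 h1
  obtain ⟨U, hU, hUc, hUe⟩ := h _ hfl
  set m := ⌊c * (S.card : ℝ)⌋₊ with hm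
  have hm1 : (1 : ℝ) ≤ m := by exact_mod_cast hfl3
  set W := U.filter (fun v => ((U.filter (fun w => G.Adj v w)).card : ℝ) ≤ 2 * ε * m) with hW
  have hWU : W ⊆ U := Finset.filter_subset _ _
  have hlow : ((U \ W).card : ℝ) * (2 * ε * m) ≤ edgeCt G U := by
    unfold edgeCt
    push_cast
    calc ((U \ W).card : ℝ) * (2 * ε * m) = ∑ w ∈ U \ W, (2 * ε * m) := by simp
      _ ≤ ∑ v ∈ U \ W, ((U.filter (fun w => G.Adj v w)).card : ℝ) := by
        apply Finset.sum_le_sum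
        intro w hw
        rw [Finset.mem_sdiff, hW, Finset.mem_filter] at hw
        by_contra hcon
        exact hw.2 ⟨hw.1, (not_le.1 hcon).le⟩
      _ ≤ _ := Finset.sum_le_sum_of_subset_of_nonneg Finset.sdiff_subset
          (fun _ _ _ => by positivity)
  have hcard : ((U \ W).card : ℝ) + W.card = m := by
    rw [← hUc]
    exact_mod_cast Finset.card_sdiff_add_card_eq_card hWU
  have hhalf : (m : ℝ) ≤ 2 * W.card := by
    have h3 : ((U \ W).card : ℝ) * (ε * m) ≤ (m / 2 : ℝ) * (ε * m) := by
      nlinarith [hlow.trans hUe]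
    have := le_of_mul_le_mul_right h3 (by positivity)
    linarith
  refine ⟨W, by linarith, ?_⟩
  intro v hv
  rw [hdeg]
  have e1 : ((W.filter (fun w => G.Adj v w)).card : ℝ) ≤ (U.filter (fun w => G.Adj v w)).card := by
    exact_mod_cast Finset.card_le_card (Finset.filter_subset_filter _ hWU)
  have e2 := (Finset.mem_filter.1 hv).2
  have e3 : (0 : ℝ) ≤ W.card := by positivity
  nlinarith

/-- For every ordered graph `H` and every `δ > 0` there is `c₂ > 0` such that every
ordered graph `G` on `n` vertices with no induced ordered copy of `H` has a subset `U`
of at least `c₂·n` vertices such that the maximum degree of `G[U]` is at most `δ·|U|`,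
or the maximum degree of the complement of `G[U]` is at most `δ·|U|`. -/
theorem ordered_induced_low_degree (k : ℕ) (H : SimpleGraph (Fin k)) (δ : ℝ) (hδ : 0 < δ) :
    ∃ c₂ : ℝ, 0 < c₂ ∧
      ∀ (n : ℕ) (G : SimpleGraph (Fin n)),
        ¬ ContainsOrdered H G →
        ∃ U : Finset (Fin n), c₂ * n ≤ (U.card : ℝ) ∧
          ((∀ v ∈ U, (degIn G U v : ℝ) ≤ δ * U.card) ∨
            (∀ v ∈ U, (degIn Gᶜ U v : ℝ) ≤ δ * U.card)) := by
  rcases Nat.eq_zero_or_pos k with rfl | hk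
  · exact ⟨1, one_pos, fun n G hG => absurd ⟨fun i => i.elim0, fun i => i.elim0, fun i => i.elim0⟩ hG⟩
  obtain ⟨i, hi⟩ := exists_pow_lt_of_lt_one (show (0 : ℝ) < δ / 4 by positivity)
    (show (2 / 3 : ℝ) < 1 by norm_num)
  obtain ⟨c, hc, hc1, h⟩ := main_ind k hk H i i
  refine ⟨c / 4, by positivity, fun n G hG => ?_⟩
  rcases h n G hG Finset.univ with h | h
  · obtain ⟨U, h1, h2⟩ := clean_up G _ _ c δ (by positivity) hc hc1 (by linarith) h
    exact ⟨U, by simpa using h1, Or.inl h2⟩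
  · obtain ⟨U, h1, h2⟩ := clean_up Gᶜ _ _ c δ (by positivity) hc hc1 (by linarith) h
    exact ⟨U, by simpa using h1, Or.inr h2⟩
end

section
/- Let V be an n-element set partitioned into four sets V₁, V₂, V₃, V₄, and let G be a graph on the vertex set V such that each V_i (i = 1,2,3,4) induces a clique in G. Then G is isomorphic to the intersection graph of a family of n convex sets in the plane. -/
/-- Centre point of each of the four classes. -/
def ctr (a : Fin 4) : ℝ × ℝ :=
  match a with
  | 0 => (4, 4)
  | 1 => (6, 0)
  | 2 => (6, 6)
  | 3 => (0, 6)

/-- Point with parameter `s` on the contact arc between classes `a < b`. -/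
def arc (a b : Fin 4) (s : ℝ) : ℝ × ℝ :=
  match a, b with
  | 0, 1 => (5 + s, 2 + s ^ 2)
  | 0, 2 => (5 + s - s ^ 2, 5 - s)
  | 0, 3 => (2 + s ^ 2, 5 + s)
  | 1, 2 => (12 + 2 * s - s ^ 2, - s)
  | 1, 3 => (s + s ^ 2, s)
  | 2, 3 => (s, 12 - 2 * s + s ^ 2)
  | _, _ => (0, 0)

/-- Coefficients of the tangent line at parameter `t` of the arc between `a < b`. -/
def co (a b : Fin 4) (t : ℝ) : ℝ × ℝ × ℝ :=
  match a, b with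
  | 0, 1 => (- 2 * t, 1, -2 + 10 * t + t ^ 2)
  | 0, 2 => (-1, -1 + 2 * t, 10 - 10 * t + t ^ 2)
  | 0, 3 => (1, - 2 * t, -2 + 10 * t + t ^ 2)
  | 1, 2 => (-1, -2 + 2 * t, 12 + t ^ 2)
  | 1, 3 => (1, -1 - 2 * t, t ^ 2)
  | 2, 3 => (2 - 2 * t, 1, -12 + t ^ 2)
  | _, _ => (0, 0, 0)

/-- The affine functional with the given coefficients. -/
def aff (c : ℝ × ℝ × ℝ) (x : ℝ × ℝ) : ℝ := c.1 * x.1 + c.2.1 * x.2 + c.2.2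

theorem aff_comb (c : ℝ × ℝ × ℝ) (x y : ℝ × ℝ) (α β : ℝ) (h : α + β = 1) :
    aff c (α • x + β • y) = α * aff c x + β * aff c y := by
  simp only [aff, Prod.fst_add, Prod.snd_add, Prod.smul_fst, Prod.smul_snd, smul_eq_mul]
  linear_combination (-c.2.2) * h

theorem convex_pos (c : ℝ × ℝ × ℝ) : Convex ℝ {x | 0 < aff c x} := by
  intro x hx y hy α β hα hβ h
  simp only [Set.mem_setOf_eq] at *
  rw [aff_comb c x y α β h]
  rcases hα.eq_or_lt with h0 | h0
  · subst h0
    have : β = 1 := by linarith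
    subst this
    linarith
  · have := mul_pos h0 hx
    have := mul_nonneg hβ hy.le
    linarith

theorem convex_nonpos (c : ℝ × ℝ × ℝ) : Convex ℝ {x | aff c x ≤ 0} := by
  intro x hx y hy α β hα hβ h
  simp only [Set.mem_setOf_eq] at *
  rw [aff_comb c x y α β h]
  nlinarith

theorem aff_arc (a b : Fin 4) (h : a < b) (s t : ℝ) :
    aff (co a b t) (arc a b s) = (s - t) ^ 2 := by
  fin_cases a <;> fin_cases b <;> first
    | exact absurd h (by decide)
    | (simp [aff, co, arc]; ring)

theorem aff_ctr (a b : Fin 4) (h : a < b) (t : ℝ) (ht : 0 ≤ t) (ht' : t ≤ 1 / 100) :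
    0 < aff (co a b t) (ctr a) ∧ aff (co a b t) (ctr b) < 0 := by
  fin_cases a <;> fin_cases b <;> first
    | exact absurd h (by decide)
    | (simp [aff, co, ctr]; constructor <;> nlinarith)

theorem aff_other (a b c d : Fin 4) (h : a < b) (hcd : c < d) (s t : ℝ)
    (hs : 0 ≤ s) (hs' : s ≤ 1 / 100) (ht : 0 ≤ t) (ht' : t ≤ 1 / 100)
    (hne : ¬ (a = c ∧ b = d)) :
    ((c = a ∨ d = a) → 0 < aff (co a b t) (arc c d s)) ∧
    ((c = b ∨ d = b) → aff (co a b t) (arc c d s) < 0) := by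
  have h1 : 0 ≤ s ^ 2 := by positivity
  have h2 : s ^ 2 ≤ 1 / 100 := by nlinarith
  have h3 : 0 ≤ t ^ 2 := by positivity
  have h4 : t ^ 2 ≤ 1 / 100 := by nlinarith
  have h5 : 0 ≤ t * s := by positivity
  have h6 : t * s ≤ 1 / 100 := by nlinarith
  have h7 : 0 ≤ t * s ^ 2 := by positivity
  have h8 : t * s ^ 2 ≤ 1 / 100 := by nlinarith
  fin_cases a <;> fin_cases b <;> first
    | exact absurd h (by decide)
    | (fin_cases c <;> fin_cases d <;> first
        | exact absurd hcd (by decide)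
        | exact absurd ⟨rfl, rfl⟩ hne
        | (constructor <;> intro hh <;> first
            | exact absurd hh (by decide)
            | (simp only [aff, co, arc]; linarith)
            | (simp [aff, co, arc]; linarith)
            | (simp [aff, co, arc]; nlinarith)))

/-- Parameter of a vertex. -/
noncomputable def par {n : ℕ} (v : Fin n) : ℝ := (v : ℝ) / (100 * n)

theorem par_nonneg {n : ℕ} (v : Fin n) : 0 ≤ par v := by
  unfold par; positivity

theorem par_le {n : ℕ} (v : Fin n) : par v ≤ 1 / 100 := by
  have hn : (0 : ℝ) < n := by exact_mod_cast v.pos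
  have hv : (v : ℝ) ≤ n := by exact_mod_cast v.isLt.le
  unfold par
  rw [div_le_iff₀ (by positivity)]
  linarith

theorem par_inj {n : ℕ} (v w : Fin n) (h : par v = par w) : v = w := by
  have hn : (0 : ℝ) < n := by exact_mod_cast v.pos
  unfold par at h
  rw [div_left_inj' (by positivity)] at h
  exact Fin.ext (by exact_mod_cast h)

/-- Generating points of the convex set of `u`. -/
def gen {n : ℕ} (G : SimpleGraph (Fin n)) (P : Fin n → Fin 4) (u : Fin n) : Set (ℝ × ℝ) :=
  {x | x = ctr (P u) ∨ (∃ w, G.Adj u w ∧ P u < P w ∧ x = arc (P u) (P w) (par w)) ∨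
    ∃ a, a < P u ∧ x = arc a (P u) (par u)}

theorem key {n : ℕ} (G : SimpleGraph (Fin n)) (P : Fin n → Fin 4) (u v : Fin n)
    (h : P u < P v) :
    G.Adj u v ↔ (convexHull ℝ (gen G P u) ∩ convexHull ℝ (gen G P v)).Nonempty := by
  constructor
  · intro hA
    exact ⟨arc (P u) (P v) (par v), subset_convexHull ℝ _ (Or.inr (Or.inl ⟨v, hA, h, rfl⟩)),
      subset_convexHull ℝ _ (Or.inr (Or.inr ⟨P u, h, rfl⟩))⟩
  · rintro ⟨x, hxu, hxv⟩
    by_contra hA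
    have hc := aff_ctr (P u) (P v) h (par v) (par_nonneg v) (par_le v)
    have e1 : convexHull ℝ (gen G P u) ⊆ {x | 0 < aff (co (P u) (P v) (par v)) x} := by
      refine convexHull_min ?_ (convex_pos _)
      rintro y (rfl | ⟨w, hw, hlt, rfl⟩ | ⟨a, ha, rfl⟩)
      · exact hc.1
      · by_cases hvw : P v = P w
        · rw [Set.mem_setOf_eq, ← hvw, aff_arc _ _ h]
          have : par w - par v ≠ 0 := by
            intro h0
            have := par_inj w v (by linarith)
            subst this
            exact hA hw
          positivity
        · exact (aff_other _ _ _ _ h hlt _ _ (par_nonneg w) (par_le w) (par_nonneg v)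
            (par_le v) (fun hh => hvw hh.2)).1 (Or.inl rfl)
      · exact (aff_other _ _ _ _ h ha _ _ (par_nonneg u) (par_le u) (par_nonneg v)
            (par_le v) (fun hh => ha.ne hh.1.symm)).1 (Or.inr rfl)
    have e2 : convexHull ℝ (gen G P v) ⊆ {x | aff (co (P u) (P v) (par v)) x ≤ 0} := by
      refine convexHull_min ?_ (convex_nonpos _)
      rintro y (rfl | ⟨w, hw, hlt, rfl⟩ | ⟨a, ha, rfl⟩)
      · exact hc.2.le
      · exact ((aff_other _ _ _ _ h hlt _ _ (par_nonneg w) (par_le w) (par_nonneg v)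
            (par_le v) (fun hh => h.ne hh.1)).2 (Or.inl rfl)).le
      · by_cases hua : P u = a
        · subst hua
          rw [Set.mem_setOf_eq, aff_arc _ _ h]
          simp
        · exact ((aff_other _ _ _ _ h ha _ _ (par_nonneg v) (par_le v) (par_nonneg v)
            (par_le v) (fun hh => hua hh.1)).2 (Or.inr rfl)).le
    have h1 := e1 hxu
    have h2 := e2 hxv
    simp only [Set.mem_setOf_eq] at h1 h2
    linarith

/-- (Pach–Tóth) Let `G` be a graph on an `n`-element vertex set partitioned into four
classes (given by `P : Fin n → Fin 4`), each of which induces a clique in `G`. Then `G`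
is the intersection graph of a family of `n` (nonempty) convex sets in the plane. -/
theorem four_cliques_convex_realizable (n : ℕ) (G : SimpleGraph (Fin n))
    (P : Fin n → Fin 4)
    (hclique : ∀ i j : Fin n, i ≠ j → P i = P j → G.Adj i j) :
    ∃ K : Fin n → Set (ℝ × ℝ),
      (∀ i, Convex ℝ (K i) ∧ (K i).Nonempty) ∧
      ∀ i j : Fin n, G.Adj i j ↔ (i ≠ j ∧ (K i ∩ K j).Nonempty) := by
  have hmem : ∀ i, ctr (P i) ∈ convexHull ℝ (gen G P i) :=
    fun i => subset_convexHull ℝ _ (Or.inl rfl)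
  refine ⟨fun i => convexHull ℝ (gen G P i),
    fun i => ⟨convex_convexHull ℝ _, _, hmem i⟩, fun i j => ?_⟩
  rcases lt_trichotomy (P i) (P j) with h | h | h
  · rw [key G P i j h]
    exact ⟨fun hh => ⟨fun e => h.ne (congrArg P e), hh⟩, fun hh => hh.2⟩
  · constructor
    · intro hA
      exact ⟨hA.ne, ctr (P i), hmem i, by rw [h]; exact hmem j⟩
    · intro hh
      exact hclique i j hh.1 h
  · rw [G.adj_comm, key G P j i h, Set.inter_comm]
    exact ⟨fun hh => ⟨fun e => h.ne (congrArg P e.symm), hh⟩, fun hh => hh.2⟩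
end

section
/- Let V be a set equipped with three linear orders <₁, <₂, <₃. Then every 5-element subset S of V contains vertices a, b, b', c (not necessarily with b ≠ b') such that the 4-tuple (a, b, b', c) is forcing. -/
/-- Given three strict orders `r₁, r₂, r₃`, the 4-tuple `(a, b, b', c)` is forcing if
`a <₁ b <₁ c`, `a <₁ b' <₁ c`, `(a,b,c)` is not a 2-hole (i.e. not both `b <₂ a` and
`b <₂ c`), and `(a,b',c)` is not a 3-hole (i.e. not both `b' <₃ a` and `b' <₃ c`). -/
def Forcing {V : Type*} (r₁ r₂ r₃ : V → V → Prop) (a b b' c : V) : Prop :=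
  r₁ a b ∧ r₁ b c ∧ r₁ a b' ∧ r₁ b' c ∧
    ¬ (r₂ b a ∧ r₂ b c) ∧ ¬ (r₃ b' a ∧ r₃ b' c)

/-- Core case: the hole conditions on five points are contradictory. -/
theorem core_case {V : Type*} (s t : V → V → Prop)
    (hs : ∀ a b, s a b → ¬ s b a) (ht : ∀ a b, t a b → ¬ t b a)
    (v w x y z : V)
    (hvx : (s w v ∧ s w x) ∨ (t w v ∧ t w x))
    (hwy : (s x w ∧ s x y) ∨ (t x w ∧ t x y))
    (hxz : (s y x ∧ s y z) ∨ (t y x ∧ t y z))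
    (hvy : (s w y ∧ s x y) ∨ (t w y ∧ t x y))
    (hwz : (s x w ∧ s y w) ∨ (t x w ∧ t y w)) : False := by
  have := hs w x
  have := hs w y
  have := hs x y
  have := ht w x
  have := ht w y
  have := ht x y
  grind

theorem five_points_contain_forcing {V : Type*} [DecidableEq V]
    (r₁ r₂ r₃ : V → V → Prop)
    (h₁ : IsStrictTotalOrder V r₁) (h₂ : IsStrictTotalOrder V r₂)
    (h₃ : IsStrictTotalOrder V r₃)
    (S : Finset V) (hS : S.card = 5) :
    ∃ a ∈ S, ∃ b ∈ S, ∃ b' ∈ S, ∃ c ∈ S, Forcing r₁ r₂ r₃ a b b' c := by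
  classical
  obtain ⟨f, hf, hm⟩ : ∃ f : Fin 5 → V, (∀ i j, i < j → r₁ (f i) (f j)) ∧ ∀ i, f i ∈ S := by
    let _ := linearOrderOfSTO r₁
    refine ⟨S.orderEmbOfFin hS, fun i j h => ?_, fun i => S.orderEmbOfFin_mem hS i⟩
    exact (S.orderEmbOfFin hS).strictMono h
  by_contra hcon
  have key : ∀ i j j' k : Fin 5, i < j → j < k → i < j' → j' < k →
      (r₂ (f j) (f i) ∧ r₂ (f j) (f k)) ∨ (r₃ (f j') (f i) ∧ r₃ (f j') (f k)) := by
    intro i j j' k a b c d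
    by_contra h
    rw [not_or] at h
    exact hcon ⟨f i, hm i, f j, hm j, f j', hm j', f k, hm k,
      hf _ _ a, hf _ _ b, hf _ _ c, hf _ _ d, h.1, h.2⟩
  have k1 := key 0 1 1 2 (by decide) (by decide) (by decide) (by decide)
  have k2 := key 1 2 2 3 (by decide) (by decide) (by decide) (by decide)
  have k3 := key 2 3 3 4 (by decide) (by decide) (by decide) (by decide)
  have k4 := key 0 1 1 3 (by decide) (by decide) (by decide) (by decide)
  have k5 := key 0 1 2 3 (by decide) (by decide) (by decide) (by decide)
  have k6 := key 0 2 1 3 (by decide) (by decide) (by decide) (by decide)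
  have k7 := key 0 2 2 3 (by decide) (by decide) (by decide) (by decide)
  have k8 := key 1 2 2 4 (by decide) (by decide) (by decide) (by decide)
  have k9 := key 1 2 3 4 (by decide) (by decide) (by decide) (by decide)
  have k10 := key 1 3 2 4 (by decide) (by decide) (by decide) (by decide)
  have k11 := key 1 3 3 4 (by decide) (by decide) (by decide) (by decide)
  refine core_case r₂ r₃ (fun a b h h' => irrefl_of r₂ a (trans_of r₂ h h'))
    (fun a b h h' => irrefl_of r₃ a (trans_of r₃ h h'))
    (f 0) (f 1) (f 2) (f 3) (f 4) k1 k2 k3 ?_ ?_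
  · clear k1 k2 k3 k8 k9 k10 k11
    grind
  · clear k1 k2 k3 k4 k5 k6 k7
    grind
end
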